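/- Let B = A₀ ⊆ A₁ ⊆ ⋯ ⊆ A_{s-1} ⊆ A_s = A be a chain of subalgebras (with the same identity) of an Artin algebra A, and for each 1 ≤ i ≤ s let I_{i-1} be a two-sided ideal of A_{i-1} that is also a left ideal of A_i, where s is a positive integer. Suppose that I₀ = rad(B) is the Jacobson radical of B. If A is 1-syzygy-finite and A₁/(I_{s-1}⋯I₁) is B-syzygy-finite (for example, representation-finite), then the finitistic dimension of B is finite. (When s = 1 the quotient A₁/(I_{s-1}⋯I₁) is understood to be 0, so the hypothesis holds automatically.) -/

import Mathlib

universe u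

open TensorProduct

section Basic

variable (Λ : Type u) [Ring Λ]

/-- `ProjDimLE Λ n M` : the module `M` admits a projective resolution of length `≤ n`
by finitely generated projective `Λ`-modules. -/
def ProjDimLE : ℕ → ModuleCat.{u} Λ → Prop
  | 0, M => Module.Projective Λ M
  | n + 1, M => ∃ (P : ModuleCat.{u} Λ) (g : P →ₗ[Λ] M),
      Module.Projective Λ P ∧ Module.Finite Λ P ∧ Function.Surjective g ∧
      ProjDimLE n (ModuleCat.of Λ (LinearMap.ker g))

/-- The finitistic dimension of `Λ` (computed on finitely generated modules) is finite. -/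
def FinFinDim : Prop :=
  ∃ n : ℕ, ∀ M : ModuleCat.{u} Λ, Module.Finite Λ M →
    (∃ k : ℕ, ProjDimLE Λ k M) → ProjDimLE Λ n M

/-- A module is indecomposable. -/
def ModIndec (M : ModuleCat.{u} Λ) : Prop :=
  Nontrivial M ∧ ∀ N₁ N₂ : Submodule Λ M, IsCompl N₁ N₂ → N₁ = ⊥ ∨ N₂ = ⊥

/-- A class of modules has only finitely many isomorphism classes of indecomposables. -/
def ClassRepFinite (C : ModuleCat.{u} Λ → Prop) : Prop :=
  ∃ (k : ℕ) (N : Fin k → ModuleCat.{u} Λ),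
    ∀ M : ModuleCat.{u} Λ, C M → ModIndec Λ M → ∃ i, Nonempty (M ≃ₗ[Λ] N i)

/-- `Λ` is representation-finite. -/
def RepFinite : Prop :=
  ClassRepFinite Λ (fun M => Module.Finite Λ M)

/-- `X` belongs to `add N`: it is a direct summand of a finite direct sum of copies of `N`. -/
def InAdd (N X : ModuleCat.{u} Λ) : Prop :=
  ∃ (k : ℕ) (i : X →ₗ[Λ] (Fin k → N)) (p : (Fin k → N) →ₗ[Λ] X),
    p.comp i = LinearMap.id

/-- A submodule is superfluous (small). -/
def IsSuperfluous {M : ModuleCat.{u} Λ} (N : Submodule Λ M) : Prop :=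
  ∀ L : Submodule Λ M, L ⊔ N = ⊤ → L = ⊤

/-- `K` is (isomorphic to) the kernel of a projective cover of `M`, i.e. a first syzygy. -/
def IsSyzygyOf (K M : ModuleCat.{u} Λ) : Prop :=
  ∃ (P : ModuleCat.{u} Λ) (g : P →ₗ[Λ] M), Module.Projective Λ P ∧ Module.Finite Λ P ∧
    Function.Surjective g ∧ IsSuperfluous Λ (LinearMap.ker g) ∧
    Nonempty (K ≃ₗ[Λ] LinearMap.ker g)

/-- `K` is an `n`-th syzygy of `M`. -/
def IsNthSyzygy : ℕ → ModuleCat.{u} Λ → ModuleCat.{u} Λ → Prop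
  | 0, K, M => Nonempty (K ≃ₗ[Λ] M)
  | n + 1, K, M => ∃ K' : ModuleCat.{u} Λ, IsNthSyzygy n K' M ∧ IsSyzygyOf Λ K K'

/-- A class `C` of modules is `m`-syzygy-finite. -/
def MSyzygyFiniteClass (m : ℕ) (C : ModuleCat.{u} Λ → Prop) : Prop :=
  ∃ N : ModuleCat.{u} Λ, Module.Finite Λ N ∧
    ∀ X, C X → ∀ K, IsNthSyzygy Λ m K X → InAdd Λ N K

/-- A class `C` of modules is syzygy-finite. -/
def SyzygyFiniteClass (C : ModuleCat.{u} Λ → Prop) : Prop :=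
  ∃ m : ℕ, MSyzygyFiniteClass Λ m C

/-- `Λ` is 1-syzygy-finite. -/
def OneSyzygyFinite : Prop :=
  MSyzygyFiniteClass Λ 1 (fun X => Module.Finite Λ X)

/-- `Λ` is syzygy-finite. -/
def AlgSyzygyFinite : Prop :=
  SyzygyFiniteClass Λ (fun X => Module.Finite Λ X)

/-- The Jacobson radical of `Λ` (intersection of the maximal left ideals). -/
def jacobsonRad : Ideal Λ := sInf {I : Ideal Λ | I.IsMaximal}

end Basic

/-- The Jacobson radical of a subalgebra, as a subset of the ambient algebra. -/
def radSet {R A : Type u} [CommRing R] [Ring A] [Algebra R A] (S : Subalgebra R A) : Set A :=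
  Subtype.val '' ((jacobsonRad ↥S : Ideal ↥S) : Set ↥S)

section Rel

variable {R : Type u} [CommRing R] {B A : Type u} [Ring B] [Ring A]
  [Algebra R B] [Algebra R A] (φ : B →ₐ[R] A)

/-- The tensor product `A ⊗_B X` of the (A,B)-bimodule `A` with a left `A`-module `X`
(viewed as a `B`-module via `φ`), realized as a quotient of `A ⊗_R X`. -/
noncomputable def relTensor (X : ModuleCat.{u} A) : ModuleCat.{u} A :=
  letI : Module R X := Module.compHom X (algebraMap R A)
  ModuleCat.of A ((A ⊗[R] X) ⧸ Submodule.span A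
    {z : A ⊗[R] X | ∃ (a : A) (b : B) (x : X),
      z = (a * φ b) ⊗ₜ[R] x - a ⊗ₜ[R] (φ b • x)})

/-- `X` is `(A,B)`-projective: a direct summand of `A ⊗_B X`. -/
noncomputable def RelProjective (X : ModuleCat.{u} A) : Prop :=
  ∃ (i : X →ₗ[A] relTensor φ X) (p : relTensor φ X →ₗ[A] X), p.comp i = LinearMap.id

/-- The map `g` admits a `B`-linear map `h` with `g ∘ h ∘ g = g`
(this encodes `(A,B)`-exactness of the corresponding short exact sequence). -/
def RelSplitB {P X : ModuleCat.{u} A} (g : P →ₗ[A] X) : Prop :=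
  ∃ h : X →+ P, (∀ (b : B) (x : X), h (φ b • x) = φ b • h x) ∧
    ∀ p : P, g (h (g p)) = g p

/-- `RelProjDimLE φ n X` : `X` has an `(A,B)`-exact resolution of length `≤ n` by
finitely generated `(A,B)`-projective modules, i.e. relative projective dimension `≤ n`. -/
noncomputable def RelProjDimLE : ℕ → ModuleCat.{u} A → Prop
  | 0, X => RelProjective φ X
  | n + 1, X => ∃ (P : ModuleCat.{u} A) (g : P →ₗ[A] X),
      RelProjective φ P ∧ Module.Finite A P ∧ Function.Surjective g ∧ RelSplitB φ g ∧
      RelProjDimLE n (ModuleCat.of A (LinearMap.ker g))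

/-- Restriction of scalars along `φ` of an `A`-module, as an object of `ModuleCat B`. -/
def resMod (X : ModuleCat.{u} A) : ModuleCat.{u} B :=
  @ModuleCat.of B _ X _ (Module.compHom X φ.toRingHom)

/-- The right `B`-module structure on `A` induced by `φ`. -/
def rightModB : Module Bᵐᵒᵖ A :=
  Module.compHom A (RingHom.op φ.toRingHom)

end Rel

section Decomposition

variable {Λ : Type u} [Ring Λ]

/-- `X` is a direct summand of `Y`. -/
def IsSummand (X Y : Type u) [AddCommGroup X] [Module Λ X] [AddCommGroup Y] [Module Λ Y] : Prop :=
  ∃ (i : X →ₗ[Λ] Y) (p : Y →ₗ[Λ] X), p ∘ₗ i = LinearMap.id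

theorem ModIndec.bijective_or_isNilpotent {M : ModuleCat.{u} Λ} [IsNoetherian Λ M]
    [IsArtinian Λ M] (hM : ModIndec Λ M) (f : Module.End Λ M) :
    Function.Bijective f ∨ IsNilpotent f := by
  obtain ⟨n, hn⟩ := Filter.eventually_atTop.mp f.eventually_isCompl_ker_pow_range_pow
  have hc := hn (n + 1) (by omega)
  rcases hM.2 _ _ hc with h | h
  · left
    have hinj : Function.Injective f := by
      have : Function.Injective (f ^ (n + 1)) := LinearMap.ker_eq_bot.mp h
      rw [pow_succ] at this
      exact Function.Injective.of_comp this
    exact IsArtinian.bijective_of_injective_endomorphism f hinj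
  · right
    exact ⟨n + 1, LinearMap.range_eq_bot.mp h⟩

theorem ModIndec.bijective_of_add {M : ModuleCat.{u} Λ} [IsNoetherian Λ M]
    [IsArtinian Λ M] (hM : ModIndec Λ M) (f g : Module.End Λ M)
    (h : Function.Bijective (f + g)) : Function.Bijective f ∨ Function.Bijective g := by
  have hu : IsUnit (f + g) := (Module.End.isUnit_iff _).mpr h
  obtain ⟨u, hu⟩ := hu
  have key : (↑u⁻¹ * f) + (↑u⁻¹ * g) = 1 := by
    rw [← mul_add, ← hu, Units.inv_mul]
  rcases hM.bijective_or_isNilpotent (↑u⁻¹ * f) with h1 | h1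
  · left
    rw [← Module.End.isUnit_iff] at h1 ⊢
    simpa using u.isUnit.mul h1
  · right
    rw [← Module.End.isUnit_iff]
    have h2 : IsUnit (↑u⁻¹ * g) := by
      rw [eq_sub_of_add_eq' key]
      exact h1.isUnit_one_sub
    simpa using u.isUnit.mul h2

theorem ModIndec.bijective_of_sum {M : ModuleCat.{u} Λ} [IsNoetherian Λ M]
    [IsArtinian Λ M] (hM : ModIndec Λ M) {ι : Type*} (s : Finset ι) (f : ι → Module.End Λ M)
    (h : Function.Bijective (∑ t ∈ s, f t : Module.End Λ M)) :
    ∃ t ∈ s, Function.Bijective (f t) := by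
  classical
  induction s using Finset.induction_on with
  | empty =>
    have := hM.1
    obtain ⟨x, hx⟩ := exists_ne (0 : M)
    exact absurd (h.1 (a₁ := x) (a₂ := 0) (by simp)) hx
  | insert a s ha ih =>
    rw [Finset.sum_insert ha] at h
    rcases hM.bijective_of_add _ _ h with h | h
    · exact ⟨a, by simp, h⟩
    · obtain ⟨t, ht, h⟩ := ih h
      exact ⟨t, by simp [ht], h⟩

theorem IsSummand.of_bijective {X Y : Type u} [AddCommGroup X] [Module Λ X] [AddCommGroup Y]
    [Module Λ Y] (i : X →ₗ[Λ] Y) (p : Y →ₗ[Λ] X) (h : Function.Bijective (p ∘ₗ i)) :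
    IsSummand (Λ := Λ) X Y :=
  ⟨i, (LinearEquiv.ofBijective _ h).symm.toLinearMap ∘ₗ p, by
    ext x
    exact (LinearEquiv.ofBijective _ h).symm_apply_apply x⟩

theorem IsSummand.equiv_of_modIndec {X Y : ModuleCat.{u} Λ} (hX : Nontrivial X)
    (hY : ModIndec Λ Y) (h : IsSummand (Λ := Λ) X Y) : Nonempty (X ≃ₗ[Λ] Y) := by
  obtain ⟨i, p, hip⟩ := h
  have hip' : ∀ x, p (i x) = x := fun x => LinearMap.congr_fun hip x
  have hinj : Function.Injective i := Function.LeftInverse.injective hip'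
  have hc : IsCompl (LinearMap.range i) (LinearMap.ker p) := by
    constructor
    · rw [Submodule.disjoint_def]
      rintro _ ⟨x, rfl⟩ hx
      have : p (i x) = 0 := hx
      rw [hip'] at this
      simp [this]
    · rw [codisjoint_iff, Submodule.eq_top_iff']
      intro y
      rw [Submodule.mem_sup]
      exact ⟨i (p y), ⟨_, rfl⟩, y - i (p y), by simp [hip'], by simp⟩
  rcases hY.2 _ _ hc with h | h
  · exfalso
    obtain ⟨x, hx⟩ := exists_ne (0 : X)
    have : i = 0 := LinearMap.range_eq_bot.mp h
    exact hx (by rw [← hip' x, this]; simp)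
  · refine ⟨LinearEquiv.ofBijective i ⟨hinj, ?_⟩⟩
    rw [← LinearMap.range_eq_top]
    rw [h] at hc
    simpa using hc.sup_eq_top

theorem IsSummand.of_pi {X : ModuleCat.{u} Λ} [IsNoetherian Λ X] [IsArtinian Λ X]
    (hX : ModIndec Λ X) {Y : ModuleCat.{u} Λ} (h : InAdd Λ Y X) : IsSummand (Λ := Λ) X Y := by
  obtain ⟨k, i, p, hip⟩ := h
  have : ∑ t : Fin k, (p ∘ₗ LinearMap.single Λ _ t) ∘ₗ (LinearMap.proj t ∘ₗ i)
      = (LinearMap.id : X →ₗ[Λ] X) := by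
    rw [← hip]
    ext x
    simp only [LinearMap.sum_apply, LinearMap.comp_apply, ← map_sum]
    congr 1
    exact Finset.univ_sum_single (i x)
  obtain ⟨t, -, ht⟩ := hX.bijective_of_sum Finset.univ
    (fun t : Fin k => (p ∘ₗ LinearMap.single Λ _ t) ∘ₗ (LinearMap.proj t ∘ₗ i)) (by
      rw [this]; exact Function.bijective_id)
  exact IsSummand.of_bijective _ _ ht

theorem IsSummand.of_prod {X : ModuleCat.{u} Λ} [IsNoetherian Λ X] [IsArtinian Λ X]
    (hX : ModIndec Λ X) {Y Z : Type u} [AddCommGroup Y] [Module Λ Y] [AddCommGroup Z] [Module Λ Z]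
    (h : IsSummand (Λ := Λ) X (Y × Z)) :
    IsSummand (Λ := Λ) X Y ∨ IsSummand (Λ := Λ) X Z := by
  obtain ⟨i, p, hip⟩ := h
  have : (p ∘ₗ LinearMap.inl Λ Y Z) ∘ₗ (LinearMap.fst Λ Y Z ∘ₗ i) +
      (p ∘ₗ LinearMap.inr Λ Y Z) ∘ₗ (LinearMap.snd Λ Y Z ∘ₗ i) = (LinearMap.id : X →ₗ[Λ] X) := by
    rw [← hip]
    ext x
    simp [← map_add]
  rcases hX.bijective_of_add _ _ (by rw [this]; exact Function.bijective_id) with h | h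
  · exact Or.inl (IsSummand.of_bijective _ _ h)
  · exact Or.inr (IsSummand.of_bijective _ _ h)

/-- A property of finite length modules that is invariant under isomorphism, closed under finite
direct sums and true for indecomposable modules holds for all finite length modules. -/
theorem ModuleCat.indec_induction {Q : ModuleCat.{u} Λ → Prop}
    (equiv : ∀ M N : ModuleCat.{u} Λ, (M ≃ₗ[Λ] N) → Q M → Q N)
    (zero : ∀ M : ModuleCat.{u} Λ, Subsingleton M → Q M)
    (prod : ∀ M N : ModuleCat.{u} Λ, Q M → Q N → Q (ModuleCat.of Λ (M × N)))
    (indec : ∀ M : ModuleCat.{u} Λ, IsNoetherian Λ M → IsArtinian Λ M → ModIndec Λ M → Q M)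
    (M : ModuleCat.{u} Λ) [IsNoetherian Λ M] [IsArtinian Λ M] : Q M := by
  suffices h : ∀ N : Submodule Λ M, Q (ModuleCat.of Λ N) from
    equiv _ _ (Submodule.topEquiv (R := Λ) (M := M)) (h ⊤)
  intro N
  induction N using WellFoundedLT.induction with
  | ind N ih =>
  by_cases hN : ModIndec Λ (ModuleCat.of Λ N)
  · exact indec _ (inferInstanceAs (IsNoetherian Λ N)) (inferInstanceAs (IsArtinian Λ N)) hN
  by_cases hs : Subsingleton N
  · exact zero _ hs
  rw [not_subsingleton_iff_nontrivial] at hs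
  have hN' : ∃ N₁ N₂ : Submodule Λ N, IsCompl N₁ N₂ ∧ N₁ ≠ ⊥ ∧ N₂ ≠ ⊥ := by
    by_contra! hcon
    refine hN ⟨hs, fun N₁ N₂ h => ?_⟩
    by_cases h1 : N₁ = ⊥
    · exact Or.inl h1
    · exact Or.inr (hcon N₁ N₂ h h1)
  obtain ⟨N₁, N₂, hc, h1, h2⟩ := hN'
  have key : ∀ N' : Submodule Λ N, N' ≠ ⊤ → Q (ModuleCat.of Λ N') := by
    intro N' h
    refine equiv (ModuleCat.of Λ (N'.map N.subtype)) _
      (Submodule.equivMapOfInjective N.subtype N.injective_subtype N').symm (ih _ ?_)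
    refine lt_of_le_of_ne (Submodule.map_subtype_le _ _) fun heq => h ?_
    apply Submodule.map_injective_of_injective N.injective_subtype
    rw [heq, Submodule.map_top, Submodule.range_subtype]
  have hne1 : N₁ ≠ ⊤ := by
    rintro rfl
    exact h2 (by simpa using hc.inf_eq_bot)
  have hne2 : N₂ ≠ ⊤ := by
    rintro rfl
    exact h1 (by simpa using hc.inf_eq_bot)
  exact equiv (ModuleCat.of Λ (N₁ × N₂)) _ (Submodule.prodEquivOfIsCompl N₁ N₂ hc)
    (prod _ _ (key N₁ hne1) (key N₂ hne2))

/-- Gaussian elimination: an isomorphism of direct sums with an invertible corner. -/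
theorem LinearEquiv.cancel_of_bijective {M N X Y : Type u} [AddCommGroup M] [Module Λ M]
    [AddCommGroup N] [Module Λ N] [AddCommGroup X] [Module Λ X] [AddCommGroup Y] [Module Λ Y]
    (e : (M × X) ≃ₗ[Λ] (N × Y))
    (h : Function.Bijective (LinearMap.fst Λ N Y ∘ₗ e.toLinearMap ∘ₗ LinearMap.inl Λ M X)) :
    Nonempty (X ≃ₗ[Λ] Y) := by
  let a := LinearEquiv.ofBijective _ h
  have ha : ∀ m, a m = (e (m, 0)).1 := fun m => rfl
  let b : X →ₗ[Λ] N := LinearMap.fst Λ N Y ∘ₗ e.toLinearMap ∘ₗ LinearMap.inr Λ M X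
  let v : X →ₗ[Λ] (M × X) := LinearMap.prod (-(a.symm.toLinearMap ∘ₗ b)) LinearMap.id
  let g : X →ₗ[Λ] Y := LinearMap.snd Λ N Y ∘ₗ e.toLinearMap ∘ₗ v
  have hsplit : ∀ (m : M) (x : X), e (m, x) = e (m, 0) + e (0, x) := by
    intro m x
    rw [← map_add]; simp
  have hv1 : ∀ x, (e (v x)).1 = 0 := by
    intro x
    have : v x = (-(a.symm (b x)), x) := rfl
    rw [this, hsplit, Prod.fst_add, ← ha, map_neg, a.apply_symm_apply]
    exact neg_add_cancel _
  refine ⟨LinearEquiv.ofBijective g ⟨?_, ?_⟩⟩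
  · rw [injective_iff_map_eq_zero]
    intro x hx
    have : e (v x) = 0 := Prod.ext (hv1 x) hx
    have h0 : v x = 0 := by simpa using this
    exact congrArg Prod.snd h0
  · intro y
    obtain ⟨⟨m, x⟩, hmx⟩ := e.surjective (0, y)
    refine ⟨x, ?_⟩
    have hm : m = -(a.symm (b x)) := by
      rw [eq_neg_iff_add_eq_zero]
      apply a.injective
      rw [map_add, a.apply_symm_apply, map_zero, ha]
      have := congrArg Prod.fst hmx
      rw [hsplit] at this
      exact this
    have : v x = (m, x) := by rw [hm]; rfl
    change (e (v x)).2 = y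
    rw [this, hmx]

/-- A retraction `p` splits off the retract as a direct factor. -/
theorem LinearMap.exists_equiv_prod_of_comp_eq_id {X Y : Type u} [AddCommGroup X] [Module Λ X]
    [AddCommGroup Y] [Module Λ Y] {i : X →ₗ[Λ] Y} {p : Y →ₗ[Λ] X} (hip : p ∘ₗ i = LinearMap.id) :
    ∃ e : Y ≃ₗ[Λ] (X × LinearMap.ker p), ∀ y, (e y).1 = p y := by
  have hip' : ∀ x, p (i x) = x := fun x => LinearMap.congr_fun hip x
  refine ⟨LinearEquiv.ofLinearMap
    (LinearMap.prod p (LinearMap.codRestrict _ (LinearMap.id - i ∘ₗ p) (by intro y; simp [hip'])))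
    (LinearMap.coprod i (LinearMap.ker p).subtype) ?_ ?_, fun y => rfl⟩
  · ext x <;> simp [hip']
  · ext x; simp

theorem LinearEquiv.cancel_of_modIndec {M : ModuleCat.{u} Λ} [IsNoetherian Λ M]
    [IsArtinian Λ M] (hM : ModIndec Λ M) {X Y : Type u} [AddCommGroup X] [Module Λ X]
    [AddCommGroup Y] [Module Λ Y] (e : (M × X) ≃ₗ[Λ] (M × Y)) : Nonempty (X ≃ₗ[Λ] Y) := by
  let i₁ : M →ₗ[Λ] M := LinearMap.fst Λ M Y ∘ₗ e.toLinearMap ∘ₗ LinearMap.inl Λ M X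
  let i₂ : M →ₗ[Λ] Y := LinearMap.snd Λ M Y ∘ₗ e.toLinearMap ∘ₗ LinearMap.inl Λ M X
  let p₁ : M →ₗ[Λ] M := LinearMap.fst Λ M X ∘ₗ e.symm.toLinearMap ∘ₗ LinearMap.inl Λ M Y
  let p₂ : Y →ₗ[Λ] M := LinearMap.fst Λ M X ∘ₗ e.symm.toLinearMap ∘ₗ LinearMap.inr Λ M Y
  have hsum : p₁ ∘ₗ i₁ + p₂ ∘ₗ i₂ = (LinearMap.id : M →ₗ[Λ] M) := by
    ext m
    have : (e (m, 0)) = ((e (m, 0)).1, 0) + (0, (e (m, 0)).2) := by simp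
    have h2 := congrArg (fun z => (e.symm z).1) this
    simp only [map_add, Prod.fst_add, e.symm_apply_apply] at h2
    exact h2.symm
  rcases hM.bijective_of_add _ _ (by rw [hsum]; exact Function.bijective_id) with h | h
  · apply LinearEquiv.cancel_of_bijective e
    have hinj : Function.Injective i₁ := Function.Injective.of_comp (f := p₁) h.1
    exact IsArtinian.bijective_of_injective_endomorphism i₁ hinj
  · obtain ⟨f, hf⟩ := LinearMap.exists_equiv_prod_of_comp_eq_id (i := i₂)
      (p := (LinearEquiv.ofBijective _ h).symm.toLinearMap ∘ₗ p₂) (by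
        ext x
        exact (LinearEquiv.ofBijective _ h).symm_apply_apply x)
    obtain ⟨g⟩ := LinearEquiv.cancel_of_bijective
      (e ≪≫ₗ (LinearEquiv.refl Λ M).prodCongr f ≪≫ₗ (LinearEquiv.prodAssoc Λ M M _).symm ≪≫ₗ
        (LinearEquiv.prodComm Λ M M).prodCongr (LinearEquiv.refl Λ _) ≪≫ₗ
        LinearEquiv.prodAssoc Λ M M _) (by
        convert Function.bijective_id
        ext m
        change (f (i₂ m)).1 = m
        rw [hf]
        exact (LinearEquiv.ofBijective _ h).symm_apply_apply m)
    exact ⟨g ≪≫ₗ f.symm⟩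

/-- Finite length modules can be cancelled from direct sums. -/
theorem LinearEquiv.cancel_of_finite_length (M : ModuleCat.{u} Λ) [IsNoetherian Λ M]
    [IsArtinian Λ M] : ∀ (X Y : Type u) [AddCommGroup X] [Module Λ X]
    [AddCommGroup Y] [Module Λ Y], ((M × X) ≃ₗ[Λ] (M × Y)) → Nonempty (X ≃ₗ[Λ] Y) := by
  refine ModuleCat.indec_induction
    (Q := fun M => ∀ (X Y : Type u) [AddCommGroup X] [Module Λ X]
    [AddCommGroup Y] [Module Λ Y], ((M × X) ≃ₗ[Λ] (M × Y)) → Nonempty (X ≃ₗ[Λ] Y)) ?_ ?_ ?_ ?_ M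
  · intro M N e hM X Y _ _ _ _ f
    exact hM X Y (e.prodCongr (LinearEquiv.refl Λ X) ≪≫ₗ f ≪≫ₗ
      e.symm.prodCongr (LinearEquiv.refl Λ Y))
  · intro M _ X Y _ _ _ _ f
    have : Unique M := @Unique.mk' M ⟨0⟩ _
    exact ⟨LinearEquiv.uniqueProd.symm ≪≫ₗ f ≪≫ₗ LinearEquiv.uniqueProd⟩
  · intro M N hM hN X Y _ _ _ _ f
    obtain ⟨g⟩ := hM _ _ ((LinearEquiv.prodAssoc Λ M N X).symm ≪≫ₗ f ≪≫ₗ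
      LinearEquiv.prodAssoc Λ M N Y)
    exact hN X Y g
  · intro M _ _ hM X Y _ _ _ _ f
    exact LinearEquiv.cancel_of_modIndec hM f

/-- Up to isomorphism a finite length module has only finitely many indecomposable summands. -/
theorem ModuleCat.exists_list_indec_summand (W : ModuleCat.{u} Λ) [IsNoetherian Λ W]
    [IsArtinian Λ W] : ∃ l : List (ModuleCat.{u} Λ), ∀ X : ModuleCat.{u} Λ, IsNoetherian Λ X →
      IsArtinian Λ X → ModIndec Λ X → IsSummand (Λ := Λ) X W → ∃ Y ∈ l, Nonempty (X ≃ₗ[Λ] Y) := by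
  refine ModuleCat.indec_induction
    (Q := fun W => ∃ l : List (ModuleCat.{u} Λ), ∀ X : ModuleCat.{u} Λ, IsNoetherian Λ X →
      IsArtinian Λ X → ModIndec Λ X → IsSummand (Λ := Λ) X W → ∃ Y ∈ l, Nonempty (X ≃ₗ[Λ] Y))
    ?_ ?_ ?_ ?_ W
  · rintro M N e ⟨l, hl⟩
    refine ⟨l, fun X h1 h2 hX ⟨i, p, hip⟩ => hl X h1 h2 hX
      ⟨e.symm.toLinearMap ∘ₗ i, p ∘ₗ e.toLinearMap, ?_⟩⟩
    rw [← hip]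
    ext x
    simp
  · intro M _
    refine ⟨[], fun X h1 h2 hX ⟨i, p, hip⟩ => ?_⟩
    have := hX.1
    obtain ⟨x, hx⟩ := exists_ne (0 : X)
    refine absurd ?_ hx
    rw [← LinearMap.id_apply (R := Λ) x, ← hip, LinearMap.comp_apply, Subsingleton.elim (i x) 0,
      map_zero]
  · rintro M N ⟨l, hl⟩ ⟨l', hl'⟩
    refine ⟨l ++ l', fun X h1 h2 hX h => ?_⟩
    rcases IsSummand.of_prod hX h with h | h
    · obtain ⟨Y, hY, e⟩ := hl X h1 h2 hX h
      exact ⟨Y, by simp [hY], e⟩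
    · obtain ⟨Y, hY, e⟩ := hl' X h1 h2 hX h
      exact ⟨Y, by simp [hY], e⟩
  · intro M _ _ hM
    exact ⟨[M], fun X _ _ hX h => ⟨M, by simp, IsSummand.equiv_of_modIndec hX.1 hM h⟩⟩

end Decomposition

/-- An additive endomorphism of a cancellative commutative monoid identifies elements of a finitely
generated submonoid after a bounded number of iterations, if it ever does. -/
theorem AddMonoidHom.exists_iterate_eq_of_finite {M : Type*} [AddCommMonoid M] [IsCancelAdd M]
    (ω : M →+ M) (S : Set M) (hS : S.Finite) :
    ∃ n, ∀ x ∈ AddSubmonoid.closure S, ∀ y ∈ AddSubmonoid.closure S, ∀ N,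
      ω^[N] x = ω^[N] y → ω^[n] x = ω^[n] y := by
  let G := Algebra.GrothendieckAddGroup M
  let ι : M →+ G := Algebra.GrothendieckAddGroup.of
  have hι : Function.Injective ι := Algebra.GrothendieckAddGroup.of_injective
  let W : G →ₗ[ℤ] G := (Algebra.GrothendieckAddGroup.lift (ι.comp ω)).toIntLinearMap
  have hW : ∀ x, W (ι x) = ι (ω x) := fun x => by
    have := DFunLike.congr_fun (Algebra.GrothendieckAddGroup.lift.symm_apply_apply (ι.comp ω)) x
    exact this
  have hWn : ∀ n x, (W ^ n) (ι x) = ι (ω^[n] x) := by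
    intro n
    induction n with
    | zero => intro x; rfl
    | succ n ih =>
      intro x
      rw [pow_succ, Module.End.mul_apply, hW, ih, Function.iterate_succ_apply]
  let H : Submodule ℤ G := Submodule.span ℤ (ι '' S)
  have hfg : IsNoetherian ℤ H := isNoetherian_span_of_finite ℤ (hS.image ι)
  have hmem : ∀ x ∈ AddSubmonoid.closure S, ι x ∈ H := by
    intro x hx
    induction hx using AddSubmonoid.closure_induction with
    | mem x hx => exact Submodule.subset_span ⟨x, hx, rfl⟩
    | zero => rw [map_zero]; exact H.zero_mem
    | add x y _ _ h1 h2 => rw [map_add]; exact H.add_mem h1 h2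
  let F : ℕ →o Submodule ℤ H :=
    ⟨fun n => (LinearMap.ker (W ^ n)).comap H.subtype, fun a b h =>
      Submodule.comap_mono (W.iterateKer.monotone h)⟩
  obtain ⟨n, hn⟩ := monotone_stabilizes_iff_noetherian.mpr hfg F
  refine ⟨n, fun x hx y hy N hN => ?_⟩
  let d : H := ⟨ι x - ι y, H.sub_mem (hmem x hx) (hmem y hy)⟩
  have hd : ∀ k, d ∈ F k ↔ ω^[k] x = ω^[k] y := by
    intro k
    change (W ^ k) (ι x - ι y) = 0 ↔ _
    rw [map_sub, hWn, hWn, sub_eq_zero, hι.eq_iff]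
  rw [← hd] at hN ⊢
  rcases le_total n N with h | h
  · rw [hn N h]; exact hN
  · exact F.monotone h hN

section Syzygies

variable {Λ : Type u} [Ring Λ]

/-- Short exact sequences of modules. -/
structure IsSES {K L M : Type u} [AddCommGroup K] [Module Λ K] [AddCommGroup L] [Module Λ L]
    [AddCommGroup M] [Module Λ M] (i : K →ₗ[Λ] L) (g : L →ₗ[Λ] M) : Prop where
  inj : Function.Injective i
  surj : Function.Surjective g
  exact : Function.Exact i g

section

variable {K L M K' L' M' N : Type u} [AddCommGroup K] [Module Λ K] [AddCommGroup L] [Module Λ L]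
    [AddCommGroup M] [Module Λ M] [AddCommGroup K'] [Module Λ K'] [AddCommGroup L'] [Module Λ L']
    [AddCommGroup M'] [Module Λ M'] [AddCommGroup N] [Module Λ N]
    {i : K →ₗ[Λ] L} {g : L →ₗ[Λ] M} {i' : K' →ₗ[Λ] L'} {g' : L' →ₗ[Λ] M'}

theorem IsSES.of_surjective (h : Function.Surjective g) : IsSES (LinearMap.ker g).subtype g :=
  ⟨Submodule.injective_subtype _, h, LinearMap.exact_subtype_ker_map g⟩

theorem IsSES.comp_apply (h : IsSES i g) (x : K) : g (i x) = 0 := h.exact.apply_apply_eq_zero x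

theorem IsSES.exists_of_eq_zero (h : IsSES i g) {y : L} (hy : g y = 0) : ∃ x, i x = y :=
  (h.exact y).mp hy

theorem IsSES.of_forall (hi : Function.Injective i) (hg : Function.Surjective g)
    (h0 : ∀ x, g (i x) = 0) (he : ∀ y, g y = 0 → ∃ x, i x = y) : IsSES i g :=
  ⟨hi, hg, fun y => ⟨he y, by rintro ⟨x, rfl⟩; exact h0 x⟩⟩

theorem IsSES.prodMap (h : IsSES i g) (h' : IsSES i' g') : IsSES (i.prodMap i') (g.prodMap g') := by
  refine .of_forall (Function.Injective.prodMap h.inj h'.inj)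
    (Function.Surjective.prodMap h.surj h'.surj) (fun x => ?_) (fun y hy => ?_)
  · exact Prod.ext (h.comp_apply x.1) (h'.comp_apply x.2)
  · obtain ⟨a, ha⟩ := h.exists_of_eq_zero (congrArg Prod.fst hy)
    obtain ⟨b, hb⟩ := h'.exists_of_eq_zero (congrArg Prod.snd hy)
    exact ⟨(a, b), Prod.ext ha hb⟩

theorem IsSES.equiv_right (h : IsSES i g) (e : M ≃ₗ[Λ] N) : IsSES i (e.toLinearMap ∘ₗ g) := by
  refine .of_forall h.inj (e.surjective.comp h.surj) (fun x => ?_) (fun y hy => ?_)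
  · simp [h.comp_apply]
  · exact h.exists_of_eq_zero (by simpa using hy)

theorem IsSES.equiv_left (h : IsSES i g) (e : N ≃ₗ[Λ] K) : IsSES (i ∘ₗ e.toLinearMap) g := by
  refine .of_forall (h.inj.comp e.injective) h.surj (fun x => ?_) (fun y hy => ?_)
  · simp [h.comp_apply]
  · obtain ⟨x, rfl⟩ := h.exists_of_eq_zero hy
    exact ⟨e.symm x, by simp⟩

theorem IsSES.equiv_middle (h : IsSES i g) (e : L ≃ₗ[Λ] N) :
    IsSES (e.toLinearMap ∘ₗ i) (g ∘ₗ e.symm.toLinearMap) := by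
  refine .of_forall (e.injective.comp h.inj) (h.surj.comp e.symm.surjective) (fun x => ?_)
    (fun y hy => ?_)
  · simp [h.comp_apply]
  · obtain ⟨x, hx⟩ := h.exists_of_eq_zero (y := e.symm y) hy
    exact ⟨x, by simp [hx]⟩

theorem IsSES.prod_middle (h : IsSES i g) :
    IsSES (LinearMap.inl Λ L N ∘ₗ i) (g.prodMap (LinearMap.id : N →ₗ[Λ] N)) := by
  refine .of_forall (LinearMap.inl_injective.comp h.inj)
    (Function.Surjective.prodMap h.surj Function.surjective_id) (fun x => ?_) (fun y hy => ?_)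
  · simp [h.comp_apply]
  · obtain ⟨x, hx⟩ := h.exists_of_eq_zero (congrArg Prod.fst hy)
    exact ⟨x, Prod.ext hx (congrArg Prod.snd hy).symm⟩

theorem IsSES.prod_left (h : IsSES i g) :
    IsSES (i.prodMap (LinearMap.id : N →ₗ[Λ] N)) (g ∘ₗ LinearMap.fst Λ L N) := by
  refine .of_forall (Function.Injective.prodMap h.inj Function.injective_id)
    (h.surj.comp LinearMap.fst_surjective) (fun x => ?_) (fun y hy => ?_)
  · simp [h.comp_apply]
  · obtain ⟨x, hx⟩ := h.exists_of_eq_zero (y := y.1) hy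
    exact ⟨(x, y.2), Prod.ext hx rfl⟩

theorem IsSES.nonempty_equiv_prod (h : IsSES i g) [Module.Projective Λ M] :
    Nonempty (L ≃ₗ[Λ] (K × M)) := by
  obtain ⟨s, hs⟩ := Module.projective_lifting_property g LinearMap.id h.surj
  obtain ⟨e, -⟩ := LinearMap.exists_equiv_prod_of_comp_eq_id hs
  have e' : K ≃ₗ[Λ] LinearMap.ker g := by
    refine LinearEquiv.ofBijective (i.codRestrict _ h.comp_apply) ⟨?_, ?_⟩
    · intro a b hab
      exact h.inj (congrArg Subtype.val hab)
    · rintro ⟨y, hy⟩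
      obtain ⟨x, hx⟩ := h.exists_of_eq_zero hy
      exact ⟨x, Subtype.ext hx⟩
  exact ⟨e ≪≫ₗ LinearEquiv.prodComm Λ _ _ ≪≫ₗ e'.symm.prodCongr (LinearEquiv.refl Λ M)⟩

theorem IsSES.finite_left [IsNoetherianRing Λ] (h : IsSES i g) [Module.Finite Λ L] :
    Module.Finite Λ K :=
  Module.Finite.of_injective i h.inj

/-- Schanuel's lemma. -/
theorem IsSES.schanuel {i' : K' →ₗ[Λ] L'} {g' : L' →ₗ[Λ] M} (h : IsSES i g) (h' : IsSES i' g')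
    [Module.Projective Λ L] [Module.Projective Λ L'] :
    Nonempty ((K × L') ≃ₗ[Λ] (K' × L)) := by
  let D : (L × L') →ₗ[Λ] M := g ∘ₗ LinearMap.fst Λ L L' - g' ∘ₗ LinearMap.snd Λ L L'
  have hD : ∀ z : LinearMap.ker D, g z.1.1 = g' z.1.2 := fun z => sub_eq_zero.mp z.2
  have h1 : IsSES ((LinearMap.inl Λ L L' ∘ₗ i).codRestrict (LinearMap.ker D)
      (fun x => by simp [D, h.comp_apply]))
      (LinearMap.snd Λ L L' ∘ₗ (LinearMap.ker D).subtype) := by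
    refine .of_forall (fun a b hab => h.inj ?_) (fun y => ?_) (fun x => ?_) (fun y hy => ?_)
    · exact congrArg (fun z => z.1.1) hab
    · obtain ⟨x, hx⟩ := h.surj (g' y)
      exact ⟨⟨(x, y), by simp [D, hx]⟩, rfl⟩
    · rfl
    · have hy' : y.1.2 = 0 := hy
      obtain ⟨x, hx⟩ := h.exists_of_eq_zero (y := y.1.1) (by rw [hD, hy', map_zero])
      exact ⟨x, Subtype.ext (Prod.ext hx hy'.symm)⟩
  have h2 : IsSES ((LinearMap.inr Λ L L' ∘ₗ i').codRestrict (LinearMap.ker D)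
      (fun x => by simp [D, h'.comp_apply]))
      (LinearMap.fst Λ L L' ∘ₗ (LinearMap.ker D).subtype) := by
    refine .of_forall (fun a b hab => h'.inj ?_) (fun y => ?_) (fun x => ?_) (fun y hy => ?_)
    · exact congrArg (fun z => z.1.2) hab
    · obtain ⟨x, hx⟩ := h'.surj (g y)
      exact ⟨⟨(y, x), by simp [D, hx]⟩, rfl⟩
    · rfl
    · have hy' : y.1.1 = 0 := hy
      obtain ⟨x, hx⟩ := h'.exists_of_eq_zero (y := y.1.2) (by rw [← hD, hy', map_zero])
      exact ⟨x, Subtype.ext (Prod.ext hy'.symm hx)⟩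
  obtain ⟨e1⟩ := h1.nonempty_equiv_prod
  obtain ⟨e2⟩ := h2.nonempty_equiv_prod
  exact ⟨e1.symm ≪≫ₗ e2⟩

/-- Rotation: a presentation of the cokernel turns a short exact sequence around. -/
theorem IsSES.rotate {P Z : Type u} [AddCommGroup P] [Module Λ P] [AddCommGroup Z] [Module Λ Z]
    (h : IsSES i g) [Module.Projective Λ P] {j : Z →ₗ[Λ] P} {q : P →ₗ[Λ] M} (hq : IsSES j q) :
    ∃ (a : Z →ₗ[Λ] (K × P)) (b : (K × P) →ₗ[Λ] L), IsSES a b := by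
  obtain ⟨l, hl⟩ := Module.projective_lifting_property g q h.surj
  have hl' : ∀ x, g (l x) = q x := fun x => LinearMap.congr_fun hl x
  let b : (K × P) →ₗ[Λ] L := i.coprod l
  have hb : ∀ x p, b (x, p) = i x + l p := fun x p => by simp [b]
  have hker : ∀ z, ∃ x, i x = - l (j z) := fun z => by
    apply h.exists_of_eq_zero
    rw [map_neg, hl', hq.comp_apply, neg_zero]
  have hbs : Function.Surjective b := by
    intro y
    obtain ⟨p, hp⟩ := hq.surj (g y)
    obtain ⟨x, hx⟩ := h.exists_of_eq_zero (y := y - l p) (by rw [map_sub, hl', hp, sub_self])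
    exact ⟨(x, p), by rw [hb, hx]; abel⟩
  have e : LinearMap.ker b ≃ₗ[Λ] Z := by
    have hz : ∀ w : LinearMap.ker b, q w.1.2 = 0 := by
      rintro ⟨⟨x, p⟩, hw⟩
      have hw' : i x + l p = 0 := by rw [← hb]; exact hw
      have := congrArg g hw'
      rw [map_add, h.comp_apply, zero_add, hl', map_zero] at this
      exact this
    let e1 : Z →ₗ[Λ] LinearMap.range j := j.rangeRestrict
    refine LinearEquiv.ofBijective
      (LinearMap.codRestrict (LinearMap.range j) (LinearMap.snd Λ K P ∘ₗ (LinearMap.ker b).subtype)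
        (fun w => hq.exists_of_eq_zero (hz w))) ⟨?_, ?_⟩ ≪≫ₗ
        (LinearEquiv.ofInjective j hq.inj).symm
    · rw [injective_iff_map_eq_zero]
      rintro ⟨⟨x, p⟩, hw⟩ h0
      have hp : p = 0 := congrArg Subtype.val h0
      have hw' : i x + l p = 0 := by rw [← hb]; exact hw
      rw [hp, map_zero, add_zero] at hw'
      have hx : x = 0 := h.inj (by rw [hw', map_zero])
      subst hp hx
      rfl
    · rintro ⟨_, z, rfl⟩
      obtain ⟨x, hx⟩ := hker z
      exact ⟨⟨(x, j z), by rw [LinearMap.mem_ker, hb, hx]; abel⟩, rfl⟩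
  exact ⟨_, b, (IsSES.of_surjective hbs).equiv_left e.symm⟩

/-- The horseshoe lemma. -/
theorem IsSES.horseshoe {P Q Z X : Type u} [AddCommGroup P] [Module Λ P] [AddCommGroup Z]
    [Module Λ Z] [AddCommGroup Q] [Module Λ Q] [AddCommGroup X] [Module Λ X]
    (h : IsSES i g) [Module.Projective Λ Q] {j : Z →ₗ[Λ] P} {q : P →ₗ[Λ] K} (hq : IsSES j q)
    {k : X →ₗ[Λ] Q} {r : Q →ₗ[Λ] M} (hr : IsSES k r) :
    ∃ (f : (P × Q) →ₗ[Λ] L) (a : Z →ₗ[Λ] LinearMap.ker f) (b : LinearMap.ker f →ₗ[Λ] X),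
      Function.Surjective f ∧ IsSES a b := by
  obtain ⟨l, hl⟩ := Module.projective_lifting_property g r h.surj
  have hl' : ∀ x, g (l x) = r x := fun x => LinearMap.congr_fun hl x
  let f : (P × Q) →ₗ[Λ] L := (i ∘ₗ q).coprod l
  have hf : ∀ x y, f (x, y) = i (q x) + l y := fun x p => by simp [f]
  have hb : ∀ w : LinearMap.ker f, r w.1.2 = 0 := by
    rintro ⟨⟨x, p⟩, hw⟩
    have hw' : i (q x) + l p = 0 := by rw [← hf]; exact hw
    have := congrArg g hw'
    rw [map_add, h.comp_apply, zero_add, hl', map_zero] at this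
    exact this
  let b : LinearMap.ker f →ₗ[Λ] X := (LinearEquiv.ofInjective k hr.inj).symm.toLinearMap ∘ₗ
    (LinearMap.codRestrict (LinearMap.range k) (LinearMap.snd Λ P Q ∘ₗ (LinearMap.ker f).subtype)
        (fun w => hr.exists_of_eq_zero (hb w)))
  have hkb : ∀ w, k (b w) = w.1.2 := by
    intro w
    have := (LinearEquiv.ofInjective k hr.inj).apply_symm_apply
      ⟨w.1.2, hr.exists_of_eq_zero (hb w)⟩
    exact congrArg Subtype.val this
  refine ⟨f, (LinearMap.inl Λ P Q ∘ₗ j).codRestrict _ (fun x => ?_), b, ?_,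
    .of_forall ?_ ?_ ?_ ?_⟩
  · simp [hf, hq.comp_apply]
  · intro y
    obtain ⟨p, hp⟩ := hr.surj (g y)
    obtain ⟨x, hx⟩ := h.exists_of_eq_zero (y := y - l p) (by rw [map_sub, hl', hp, sub_self])
    obtain ⟨x', rfl⟩ := hq.surj x
    exact ⟨(x', p), by rw [hf, hx]; abel⟩
  · intro x y hxy
    exact hq.inj (congrArg (fun z => z.1.1) hxy)
  · intro x
    obtain ⟨y, hy⟩ := h.exists_of_eq_zero (y := - l (k x))
      (by rw [map_neg, hl', hr.comp_apply, neg_zero])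
    obtain ⟨z, rfl⟩ := hq.surj y
    refine ⟨⟨(z, k x), by rw [LinearMap.mem_ker, hf, hy]; abel⟩, hr.inj ?_⟩
    rw [hkb]
  · intro x
    exact hr.inj ((hkb _).trans (map_zero k).symm)
  · rintro ⟨⟨x, p⟩, hw⟩ h0
    have hp : p = 0 := by
      have := hkb ⟨⟨x, p⟩, hw⟩
      rw [h0, map_zero] at this
      exact this.symm
    subst hp
    have hw' : i (q x) + l 0 = 0 := by rw [← hf]; exact hw
    rw [map_zero, add_zero] at hw'
    obtain ⟨z, rfl⟩ := hq.exists_of_eq_zero (y := x) (h.inj (by rw [hw', map_zero]))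
    exact ⟨z, rfl⟩

end

end Syzygies

section StableClasses

variable {Λ : Type u} [Ring Λ]

/-- `M` and `N` become isomorphic after adding finitely generated projective modules. -/
def StabIso (M N : ModuleCat.{u} Λ) : Prop :=
  ∃ P Q : ModuleCat.{u} Λ, Module.Projective Λ P ∧ Module.Finite Λ P ∧ Module.Projective Λ Q ∧
    Module.Finite Λ Q ∧ Nonempty ((M × P) ≃ₗ[Λ] (N × Q))

theorem StabIso.of_equiv {M N : ModuleCat.{u} Λ} (e : M ≃ₗ[Λ] N) : StabIso M N :=
  ⟨ModuleCat.of Λ PUnit.{u + 1}, ModuleCat.of Λ PUnit.{u + 1},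
    inferInstanceAs (Module.Projective Λ PUnit.{u + 1}),
    inferInstanceAs (Module.Finite Λ PUnit.{u + 1}),
    inferInstanceAs (Module.Projective Λ PUnit.{u + 1}),
    inferInstanceAs (Module.Finite Λ PUnit.{u + 1}), ⟨e.prodCongr (LinearEquiv.refl Λ _)⟩⟩

theorem StabIso.symm {M N : ModuleCat.{u} Λ} (h : StabIso M N) : StabIso N M := by
  obtain ⟨P, Q, h1, h2, h3, h4, ⟨e⟩⟩ := h
  exact ⟨Q, P, h3, h4, h1, h2, ⟨e.symm⟩⟩

theorem StabIso.trans {M N L : ModuleCat.{u} Λ} (h : StabIso M N) (h' : StabIso N L) :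
    StabIso M L := by
  obtain ⟨P, Q, h1, h2, h3, h4, ⟨e⟩⟩ := h
  obtain ⟨P', Q', h1', h2', h3', h4', ⟨e'⟩⟩ := h'
  refine ⟨ModuleCat.of Λ (P × P'), ModuleCat.of Λ (Q' × Q),
    inferInstanceAs (Module.Projective Λ (P × P')), inferInstanceAs (Module.Finite Λ (P × P')),
    inferInstanceAs (Module.Projective Λ (Q' × Q)), inferInstanceAs (Module.Finite Λ (Q' × Q)),
    ⟨?_⟩⟩
  exact (LinearEquiv.prodAssoc Λ M P P').symm ≪≫ₗ e.prodCongr (LinearEquiv.refl Λ P') ≪≫ₗ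
    LinearEquiv.prodAssoc Λ N Q P' ≪≫ₗ
    (LinearEquiv.refl Λ N).prodCongr (LinearEquiv.prodComm Λ Q P') ≪≫ₗ
    (LinearEquiv.prodAssoc Λ N P' Q).symm ≪≫ₗ e'.prodCongr (LinearEquiv.refl Λ Q) ≪≫ₗ
    LinearEquiv.prodAssoc Λ L Q' Q

theorem StabIso.prod {M N M' N' : ModuleCat.{u} Λ} (h : StabIso M N) (h' : StabIso M' N') :
    StabIso (ModuleCat.of Λ (M × M')) (ModuleCat.of Λ (N × N')) := by
  obtain ⟨P, Q, h1, h2, h3, h4, ⟨e⟩⟩ := h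
  obtain ⟨P', Q', h1', h2', h3', h4', ⟨e'⟩⟩ := h'
  refine ⟨ModuleCat.of Λ (P × P'), ModuleCat.of Λ (Q × Q'),
    inferInstanceAs (Module.Projective Λ (P × P')), inferInstanceAs (Module.Finite Λ (P × P')),
    inferInstanceAs (Module.Projective Λ (Q × Q')), inferInstanceAs (Module.Finite Λ (Q × Q')),
    ⟨?_⟩⟩
  exact LinearEquiv.prodProdProdComm Λ M M' P P' ≪≫ₗ e.prodCongr e' ≪≫ₗ
    LinearEquiv.prodProdProdComm Λ N Q N' Q'

theorem StabIso.cancel {M N L : ModuleCat.{u} Λ} [IsNoetherian Λ L] [IsArtinian Λ L]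
    (h : StabIso (ModuleCat.of Λ (L × M)) (ModuleCat.of Λ (L × N))) : StabIso M N := by
  obtain ⟨P, Q, h1, h2, h3, h4, ⟨e⟩⟩ := h
  obtain ⟨f⟩ := LinearEquiv.cancel_of_finite_length L (M × P) (N × Q)
    ((LinearEquiv.prodAssoc Λ L M P).symm ≪≫ₗ e ≪≫ₗ LinearEquiv.prodAssoc Λ L N Q)
  exact ⟨P, Q, h1, h2, h3, h4, ⟨f⟩⟩

/-- `K` is the kernel of a surjection onto `M` from a finitely generated projective module. -/
def IsGSyz (K M : ModuleCat.{u} Λ) : Prop :=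
  ∃ (P : ModuleCat.{u} Λ) (i : K →ₗ[Λ] P) (g : P →ₗ[Λ] M), Module.Projective Λ P ∧
    Module.Finite Λ P ∧ IsSES i g

/-- `K` is an iterated kernel of surjections from finitely generated projective modules,
starting at `M`. -/
def IsNthGSyz : ℕ → ModuleCat.{u} Λ → ModuleCat.{u} Λ → Prop
  | 0, K, M => Nonempty (K ≃ₗ[Λ] M)
  | n + 1, K, M => ∃ K' : ModuleCat.{u} Λ, IsNthGSyz n K' M ∧ IsGSyz K K'

theorem IsGSyz.finite [IsNoetherianRing Λ] {K M : ModuleCat.{u} Λ} (h : IsGSyz K M) :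
    Module.Finite Λ K := by
  obtain ⟨P, i, g, h1, h2, h⟩ := h
  exact h.finite_left

theorem IsNthGSyz.finite [IsNoetherianRing Λ] {n : ℕ} {K M : ModuleCat.{u} Λ}
    (h : IsNthGSyz n K M) [Module.Finite Λ M] : Module.Finite Λ K := by
  cases n with
  | zero => obtain ⟨e⟩ := h; exact Module.Finite.equiv e.symm
  | succ n => obtain ⟨K', -, h⟩ := h; exact h.finite

theorem IsGSyz.stabIso {K M K' M' : ModuleCat.{u} Λ} (h : IsGSyz K M) (h' : IsGSyz K' M')
    (hM : StabIso M M') : StabIso K K' := by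
  obtain ⟨P, i, g, h1, h2, h⟩ := h
  obtain ⟨P', i', g', h1', h2', h'⟩ := h'
  obtain ⟨A, B, hA1, hA2, hB1, hB2, ⟨e⟩⟩ := hM
  obtain ⟨f⟩ := ((h.prod_middle (N := A)).equiv_right e).schanuel (h'.prod_middle (N := B))
  exact ⟨ModuleCat.of Λ (P' × B), ModuleCat.of Λ (P × A),
    inferInstanceAs (Module.Projective Λ (P' × B)), inferInstanceAs (Module.Finite Λ (P' × B)),
    inferInstanceAs (Module.Projective Λ (P × A)), inferInstanceAs (Module.Finite Λ (P × A)), ⟨f⟩⟩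

theorem IsGSyz.prod {K M K' M' : ModuleCat.{u} Λ} (h : IsGSyz K M) (h' : IsGSyz K' M') :
    IsGSyz (ModuleCat.of Λ (K × K')) (ModuleCat.of Λ (M × M')) := by
  obtain ⟨P, i, g, h1, h2, h⟩ := h
  obtain ⟨P', i', g', h1', h2', h'⟩ := h'
  exact ⟨ModuleCat.of Λ (P × P'), _, _, inferInstanceAs (Module.Projective Λ (P × P')),
    inferInstanceAs (Module.Finite Λ (P × P')), h.prodMap h'⟩

theorem IsGSyz.exists (M : ModuleCat.{u} Λ) [Module.Finite Λ M] : ∃ K, IsGSyz K M := by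
  obtain ⟨n, f, hf⟩ := Module.Finite.exists_fin' Λ M
  exact ⟨ModuleCat.of Λ (LinearMap.ker f), ModuleCat.of Λ (Fin n → Λ), _, f,
    inferInstanceAs (Module.Projective Λ (Fin n → Λ)),
    inferInstanceAs (Module.Finite Λ (Fin n → Λ)), IsSES.of_surjective hf⟩

theorem IsNthGSyz.exists [IsNoetherianRing Λ] (n : ℕ) (M : ModuleCat.{u} Λ) [Module.Finite Λ M] :
    ∃ K, IsNthGSyz n K M := by
  induction n with
  | zero => exact ⟨M, ⟨LinearEquiv.refl Λ M⟩⟩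
  | succ n ih =>
    obtain ⟨K', h⟩ := ih
    have := h.finite
    obtain ⟨K, hK⟩ := IsGSyz.exists K'
    exact ⟨K, K', h, hK⟩

/-- The horseshoe lemma for syzygies. -/
theorem IsNthGSyz.horseshoe (n : ℕ) {K L M : ModuleCat.{u} Λ} {i : K →ₗ[Λ] L} {g : L →ₗ[Λ] M}
    (h : IsSES i g) {K' M' : ModuleCat.{u} Λ} (hK : IsNthGSyz n K' K) (hM : IsNthGSyz n M' M) :
    ∃ (L' : ModuleCat.{u} Λ) (i' : K' →ₗ[Λ] L') (g' : L' →ₗ[Λ] M'), IsNthGSyz n L' L ∧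
      IsSES i' g' := by
  induction n generalizing K' M' with
  | zero =>
    obtain ⟨e⟩ := hK
    obtain ⟨f⟩ := hM
    exact ⟨L, _, _, ⟨LinearEquiv.refl Λ L⟩, (h.equiv_left e).equiv_right f.symm⟩
  | succ n ih =>
    obtain ⟨K₁, hK₁, P, j, q, hP1, hP2, hK⟩ := hK
    obtain ⟨M₁, hM₁, Q, k, r, hQ1, hQ2, hM⟩ := hM
    obtain ⟨L₁, i₁, g₁, hL, hL₁⟩ := ih hK₁ hM₁
    obtain ⟨f, a, b, hf, hab⟩ := hL₁.horseshoe hK hM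
    exact ⟨ModuleCat.of Λ (LinearMap.ker f), a, b, ⟨L₁, hL, ModuleCat.of Λ (P × Q), _, f,
      inferInstanceAs (Module.Projective Λ (P × Q)), inferInstanceAs (Module.Finite Λ (P × Q)),
      IsSES.of_surjective hf⟩, hab⟩

/-- Finitely generated modules. -/
abbrev FinMod (Λ : Type u) [Ring Λ] := {M : ModuleCat.{u} Λ // Module.Finite Λ M}

instance FinMod.setoid : Setoid (FinMod Λ) where
  r M N := StabIso M.1 N.1
  iseqv := ⟨fun M => .of_equiv (LinearEquiv.refl Λ M.1), fun h => h.symm, fun h h' => h.trans h'⟩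

/-- Stable isomorphism classes of finitely generated modules. -/
def StabClass (Λ : Type u) [Ring Λ] := Quotient (FinMod.setoid (Λ := Λ))

/-- The stable isomorphism class of a finitely generated module. -/
def StabClass.mk (M : ModuleCat.{u} Λ) (hM : Module.Finite Λ M) : StabClass Λ :=
  Quotient.mk _ ⟨M, hM⟩

theorem StabClass.mk_eq_mk {M N : ModuleCat.{u} Λ} {hM : Module.Finite Λ M}
    {hN : Module.Finite Λ N} : StabClass.mk M hM = StabClass.mk N hN ↔ StabIso M N :=
  Quotient.eq (r := FinMod.setoid (Λ := Λ)) (x := ⟨M, hM⟩) (y := ⟨N, hN⟩)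

theorem StabClass.ind {p : StabClass Λ → Prop} (h : ∀ M hM, p (StabClass.mk M hM))
    (x : StabClass Λ) : p x :=
  Quotient.ind (fun M => h M.1 M.2) x

instance : Add (StabClass Λ) :=
  ⟨Quotient.map₂ (fun M N => ⟨ModuleCat.of Λ (M.1 × N.1),
    have := M.2
    have := N.2
    inferInstanceAs (Module.Finite Λ (M.1 × N.1))⟩)
    (fun _ _ h _ _ h' => StabIso.prod h h')⟩

theorem StabClass.mk_prod {M N : ModuleCat.{u} Λ} (hM : Module.Finite Λ M)
    (hN : Module.Finite Λ N) (h : Module.Finite Λ (ModuleCat.of Λ (M × N))) :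
    StabClass.mk (ModuleCat.of Λ (M × N)) h = StabClass.mk M hM + StabClass.mk N hN :=
  rfl

instance : Zero (StabClass Λ) :=
  ⟨StabClass.mk (ModuleCat.of Λ PUnit.{u + 1}) (inferInstanceAs (Module.Finite Λ PUnit.{u + 1}))⟩

theorem StabClass.mk_eq_zero {M : ModuleCat.{u} Λ} [Subsingleton M] (hM : Module.Finite Λ M) :
    StabClass.mk M hM = 0 :=
  StabClass.mk_eq_mk.mpr (.of_equiv (0 : M ≃ₗ[Λ] PUnit.{u + 1}))

instance : AddCommMonoid (StabClass Λ) where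
  add_assoc a b c := by
    induction a using StabClass.ind
    induction b using StabClass.ind
    induction c using StabClass.ind
    exact StabClass.mk_eq_mk.mpr (.of_equiv (LinearEquiv.prodAssoc Λ _ _ _))
  zero_add a := by
    induction a using StabClass.ind
    exact StabClass.mk_eq_mk.mpr (.of_equiv LinearEquiv.uniqueProd)
  add_zero a := by
    induction a using StabClass.ind
    exact StabClass.mk_eq_mk.mpr (.of_equiv LinearEquiv.prodUnique)
  add_comm a b := by
    induction a using StabClass.ind
    induction b using StabClass.ind
    exact StabClass.mk_eq_mk.mpr (.of_equiv (LinearEquiv.prodComm Λ _ _))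
  nsmul := nsmulRec

variable [IsNoetherianRing Λ]

instance [IsArtinianRing Λ] : IsCancelAdd (StabClass Λ) := by
  have : IsLeftCancelAdd (StabClass Λ) := ⟨fun a b c h => by
    induction a using StabClass.ind
    induction b using StabClass.ind
    induction c using StabClass.ind
    exact StabClass.mk_eq_mk.mpr (StabIso.cancel (StabClass.mk_eq_mk.mp h))⟩
  exact AddCommMagma.IsLeftCancelAdd.toIsCancelAdd _

/-- The syzygy operator on stable isomorphism classes. -/
noncomputable def StabClass.syz : StabClass Λ →+ StabClass Λ where
  toFun := Quotient.map
    (fun M => ⟨(have := M.2; IsGSyz.exists M.1).choose,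
      (have := M.2; IsGSyz.exists M.1).choose_spec.finite⟩)
    (fun M N h => IsGSyz.stabIso (have := M.2; IsGSyz.exists M.1).choose_spec
      (have := N.2; IsGSyz.exists N.1).choose_spec h)
  map_zero' := by
    have : Module.Finite Λ (ModuleCat.of Λ PUnit.{u + 1}) :=
      inferInstanceAs (Module.Finite Λ PUnit.{u + 1})
    refine StabClass.mk_eq_mk.mpr (
      (IsGSyz.exists (ModuleCat.of Λ PUnit.{u + 1})).choose_spec.stabIso
      (K' := ModuleCat.of Λ PUnit.{u + 1}) (M' := ModuleCat.of Λ PUnit.{u + 1}) ?_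
      (.of_equiv (LinearEquiv.refl Λ _)))
    exact ⟨ModuleCat.of Λ PUnit.{u + 1}, LinearMap.id, LinearMap.id,
      inferInstanceAs (Module.Projective Λ PUnit.{u + 1}),
      inferInstanceAs (Module.Finite Λ PUnit.{u + 1}),
      .of_forall Function.injective_id Function.surjective_id (fun x => rfl) (fun y _ => ⟨y, rfl⟩)⟩
  map_add' a b := by
    induction a using StabClass.ind with | h M hM => ?_
    induction b using StabClass.ind with | h N hN => ?_
    have : Module.Finite Λ (ModuleCat.of Λ (M × N)) := inferInstanceAs (Module.Finite Λ (M × N))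
    exact StabClass.mk_eq_mk.mpr ((IsGSyz.exists (ModuleCat.of Λ (M × N))).choose_spec.stabIso
      ((IsGSyz.exists M).choose_spec.prod (IsGSyz.exists N).choose_spec)
      (.of_equiv (LinearEquiv.refl Λ _)))

theorem StabClass.syz_mk {K M : ModuleCat.{u} Λ} (hK : Module.Finite Λ K) (hM : Module.Finite Λ M)
    (h : IsGSyz K M) : StabClass.syz (StabClass.mk M hM) = StabClass.mk K hK :=
  StabClass.mk_eq_mk.mpr ((IsGSyz.exists M).choose_spec.stabIso h
    (.of_equiv (LinearEquiv.refl Λ _)))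

theorem StabClass.iterate_syz_mk {n : ℕ} {K M : ModuleCat.{u} Λ} (hK : Module.Finite Λ K)
    (hM : Module.Finite Λ M) (h : IsNthGSyz n K M) :
    StabClass.syz^[n] (StabClass.mk M hM) = StabClass.mk K hK := by
  induction n generalizing K with
  | zero =>
    obtain ⟨e⟩ := h
    exact StabClass.mk_eq_mk.mpr (.of_equiv e.symm)
  | succ n ih =>
    obtain ⟨K', h', h⟩ := h
    rw [Function.iterate_succ_apply', ih h'.finite h', StabClass.syz_mk hK h'.finite h]

theorem IsNthGSyz.stabIso {n : ℕ} {K M K' M' : ModuleCat.{u} Λ} (h : IsNthGSyz n K M)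
    (h' : IsNthGSyz n K' M') (hM : Module.Finite Λ M) (hM' : Module.Finite Λ M')
    (e : StabIso M M') : StabIso K K' := by
  rw [← StabClass.mk_eq_mk (hM := h.finite) (hN := h'.finite),
    ← StabClass.iterate_syz_mk h.finite hM h, ← StabClass.iterate_syz_mk h'.finite hM' h',
    StabClass.mk_eq_mk.mpr e]

end StableClasses

section ProjectiveDimension

variable {Λ : Type u} [Ring Λ]

variable (Λ) in
/-- The projective dimension of `M` is less than `n`. -/
abbrev PdLT (M : Type u) [AddCommGroup M] [Module Λ M] (n : ℕ) : Prop :=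
  CategoryTheory.HasProjectiveDimensionLT (ModuleCat.of Λ M) n

section

variable {K L M N : Type u} [AddCommGroup K] [Module Λ K] [AddCommGroup L] [Module Λ L]
  [AddCommGroup M] [Module Λ M] [AddCommGroup N] [Module Λ N]
  {i : K →ₗ[Λ] L} {g : L →ₗ[Λ] M}

/-- The short complex attached to a short exact sequence of modules. -/
def IsSES.shortComplex (h : IsSES i g) : CategoryTheory.ShortComplex (ModuleCat.{u} Λ) :=
  .mk (ModuleCat.ofHom i) (ModuleCat.ofHom g) (by ext x; exact h.comp_apply x)

theorem IsSES.shortExact (h : IsSES i g) : h.shortComplex.ShortExact :=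
  ModuleCat.shortComplex_shortExact _ h.exact h.inj h.surj

theorem PdLT.mono {m n : ℕ} (h : PdLT Λ M m) (hmn : m ≤ n) : PdLT Λ M n :=
  CategoryTheory.hasProjectiveDimensionLT_of_ge _ m n hmn

theorem PdLT.equiv {n : ℕ} (h : PdLT Λ M n) (e : M ≃ₗ[Λ] N) : PdLT Λ N n :=
  CategoryTheory.hasProjectiveDimensionLT_of_iso e.toModuleIso n

theorem PdLT.of_summand {n : ℕ} (h : PdLT Λ N n) (h' : IsSummand (Λ := Λ) M N) : PdLT Λ M n := by
  obtain ⟨i, p, hip⟩ := h'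
  have r : CategoryTheory.Retract (ModuleCat.of Λ M) (ModuleCat.of Λ N) :=
    ⟨ModuleCat.ofHom i, ModuleCat.ofHom p, by rw [← ModuleCat.ofHom_comp, hip]; rfl⟩
  exact r.hasProjectiveDimensionLT n

theorem PdLT.projective_iff : PdLT Λ M 1 ↔ Module.Projective Λ M :=
  CategoryTheory.projective_iff_hasProjectiveDimensionLT_one.symm.trans
    (IsProjective.iff_projective (R := Λ) M).symm

theorem PdLT.of_projective [Module.Projective Λ M] {n : ℕ} (hn : 1 ≤ n) : PdLT Λ M n :=
  (projective_iff.mpr inferInstance).mono hn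

theorem IsSES.pdLT_middle (h : IsSES i g) {n : ℕ} (hK : PdLT Λ K n) (hM : PdLT Λ M n) :
    PdLT Λ L n :=
  h.shortExact.hasProjectiveDimensionLT_X₂ n hK hM

theorem IsSES.pdLT_right (h : IsSES i g) {n : ℕ} (hK : PdLT Λ K n) (hL : PdLT Λ L (n + 1)) :
    PdLT Λ M (n + 1) :=
  h.shortExact.hasProjectiveDimensionLT_X₃ n hK hL

theorem IsSES.pdLT_left (h : IsSES i g) {n : ℕ} (hL : PdLT Λ L n) (hM : PdLT Λ M (n + 1)) :
    PdLT Λ K n :=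
  h.shortExact.hasProjectiveDimensionLT_X₁ n hL hM

theorem PdLT.prod {n : ℕ} (hK : PdLT Λ K n) (hM : PdLT Λ M n) : PdLT Λ (K × M) n :=
  IsSES.pdLT_middle (i := LinearMap.inl Λ K M) (g := LinearMap.snd Λ K M)
    (.of_forall LinearMap.inl_injective LinearMap.snd_surjective (fun _ => rfl)
      (fun y hy => ⟨y.1, Prod.ext rfl hy.symm⟩)) hK hM

end

theorem IsGSyz.pdLT_iff {K M : ModuleCat.{u} Λ} (h : IsGSyz K M) {n : ℕ} :
    PdLT Λ M (n + 2) ↔ PdLT Λ K (n + 1) := by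
  obtain ⟨P, i, g, h1, h2, h⟩ := h
  exact ⟨fun hM => h.pdLT_left (.of_projective (by lia)) hM,
    fun hK => h.pdLT_right hK (.of_projective (by lia))⟩

theorem IsNthGSyz.pdLT_iff {m : ℕ} {K M : ModuleCat.{u} Λ} (h : IsNthGSyz m K M) {n : ℕ} :
    PdLT Λ M (n + m + 1) ↔ PdLT Λ K (n + 1) := by
  induction m generalizing K n with
  | zero =>
    obtain ⟨e⟩ := h
    exact ⟨fun h => h.equiv e.symm, fun h => h.equiv e⟩
  | succ m ih =>
    obtain ⟨K', h', h⟩ := h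
    rw [← h.pdLT_iff, ← ih h', show n + (m + 1) + 1 = n + 1 + m + 1 by lia]

theorem projDimLE_iff [IsNoetherianRing Λ] {n : ℕ} {M : ModuleCat.{u} Λ} [Module.Finite Λ M] :
    ProjDimLE Λ n M ↔ PdLT Λ M (n + 1) := by
  induction n generalizing M with
  | zero => exact PdLT.projective_iff.symm
  | succ n ih =>
    constructor
    · rintro ⟨P, g, h1, h2, hg, h⟩
      have : Module.Finite Λ (ModuleCat.of Λ (LinearMap.ker g)) :=
        inferInstanceAs (Module.Finite Λ (LinearMap.ker g))
      have hs : IsGSyz (ModuleCat.of Λ (LinearMap.ker g)) M :=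
        ⟨P, _, g, h1, h2, .of_surjective hg⟩
      exact hs.pdLT_iff.mpr (ih.mp h)
    · intro h
      obtain ⟨k, g, hg⟩ := Module.Finite.exists_fin' Λ M
      have : Module.Finite Λ (ModuleCat.of Λ (LinearMap.ker g)) :=
        inferInstanceAs (Module.Finite Λ (LinearMap.ker g))
      have h1 : Module.Projective Λ (ModuleCat.of Λ (Fin k → Λ)) :=
        inferInstanceAs (Module.Projective Λ (Fin k → Λ))
      have h2 : Module.Finite Λ (ModuleCat.of Λ (Fin k → Λ)) :=
        inferInstanceAs (Module.Finite Λ (Fin k → Λ))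
      have hs : IsGSyz (ModuleCat.of Λ (LinearMap.ker g)) M :=
        ⟨ModuleCat.of Λ (Fin k → Λ), _, g, h1, h2, .of_surjective hg⟩
      exact ⟨ModuleCat.of Λ (Fin k → Λ), g, h1, h2, hg, ih.mpr (hs.pdLT_iff.mp h)⟩

section

variable {X P Z : Type u} [AddCommGroup X] [Module Λ X] [AddCommGroup P] [Module Λ P]
  [AddCommGroup Z] [Module Λ Z] {f : X →ₗ[Λ] X} {g : X →ₗ[Λ] P} {c : X × P →ₗ[Λ] Z}

open CategoryTheory Abelian in
theorem IsSES.pdLT_of_isNilpotent [Module.Projective Λ P] (h : IsSES (f.prod g) c)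
    (hf : IsNilpotent f) {N : ℕ} (hN : 1 ≤ N) (hZ : PdLT Λ Z N) : PdLT Λ X N := by
  obtain ⟨m, hm⟩ := hf
  refine (hasProjectiveDimensionLT_iff.{u} _ _).mpr fun j hj T => ?_
  have key : ∀ x : Ext (ModuleCat.of Λ X) T j, ∃ y : Ext (ModuleCat.of Λ X) T j,
      (Ext.mk₀ (ModuleCat.ofHom f)).comp y (zero_add j) = x := by
    intro x
    obtain ⟨y, hy⟩ := Ext.contravariant_sequence_exact₁ h.shortExact T x (add_comm 1 j)
      (Ext.eq_zero_of_hasProjectiveDimensionLT (X := ModuleCat.of Λ Z) _ N (by lia))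
    refine ⟨(Ext.mk₀ (ModuleCat.ofHom (LinearMap.inl Λ X P))).comp y (zero_add j), ?_⟩
    have hP : (Ext.mk₀ (ModuleCat.ofHom (LinearMap.inr Λ X P))).comp
        (show Ext (ModuleCat.of Λ (X × P)) T j from y) (zero_add j) = 0 := by
      have : PdLT Λ P 1 := PdLT.projective_iff.mpr inferInstance
      exact Ext.eq_zero_of_hasProjectiveDimensionLT _ 1 (by lia)
    have hs : ModuleCat.ofHom (f.prod g) =
        ModuleCat.ofHom f ≫ ModuleCat.ofHom (LinearMap.inl Λ X P) +
          ModuleCat.ofHom g ≫ ModuleCat.ofHom (LinearMap.inr Λ X P) := by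
      ext x <;> simp
    rw [← hy]
    change _ = (Ext.mk₀ (ModuleCat.ofHom (f.prod g))).comp
      (show Ext (ModuleCat.of Λ (X × P)) T j from y) (zero_add j)
    rw [hs, Ext.mk₀_add, Ext.add_comp, ← Ext.mk₀_comp_mk₀_assoc, ← Ext.mk₀_comp_mk₀_assoc, hP,
      Ext.comp_zero, add_zero]
  have iter : ∀ (k : ℕ) (x : Ext (ModuleCat.of Λ X) T j), ∃ y : Ext (ModuleCat.of Λ X) T j,
      (Ext.mk₀ (ModuleCat.ofHom (f ^ k))).comp y (zero_add j) = x := by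
    intro k
    induction k with
    | zero => exact fun x => ⟨x, x.mk₀_id_comp⟩
    | succ k ih =>
      intro x
      obtain ⟨y, rfl⟩ := ih x
      obtain ⟨z, rfl⟩ := key y
      refine ⟨z, ?_⟩
      rw [Ext.mk₀_comp_mk₀_assoc, pow_succ']
      rfl
  intro x
  obtain ⟨y, rfl⟩ := iter m x
  rw [hm, ModuleCat.ofHom_zero, Ext.mk₀_zero, Ext.zero_comp]

/-- The Fitting decomposition splits off the part of `X` on which `f` is invertible. -/
theorem IsSES.exists_isNilpotent [IsNoetherian Λ X] [IsArtinian Λ X] (h : IsSES (f.prod g) c) :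
    ∃ (Y : Submodule Λ X) (f' : Y →ₗ[Λ] Y) (c' : Y × P →ₗ[Λ] Z),
      IsSummand (Λ := Λ) Y X ∧ IsNilpotent f' ∧ IsSES (f'.prod (g ∘ₗ Y.subtype)) c' := by
  obtain ⟨n, hn⟩ := Filter.eventually_atTop.mp
    (f.eventually_isCompl_ker_pow_range_pow.and (Filter.eventually_ge_atTop 1))
  obtain ⟨-, hpos⟩ := hn n le_rfl
  replace hn := fun k hk => (hn k hk).1
  have hc := hn (n + 1) (by lia)
  have hc' := hn n le_rfl
  have hk : LinearMap.ker (f ^ (n + 1)) ≤ LinearMap.ker (f ^ n) := by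
    intro x hx
    have h1 : (f ^ n) x ∈ LinearMap.range (f ^ n) := ⟨x, rfl⟩
    have h2 : (f ^ n) x ∈ LinearMap.ker (f ^ n) := by
      rw [LinearMap.mem_ker] at hx ⊢
      rw [← Module.End.mul_apply, ← pow_add, show n + n = n - 1 + (n + 1) by lia, pow_add,
        Module.End.mul_apply, hx, map_zero]
    exact (Submodule.disjoint_def.mp hc'.disjoint) _ h2 h1
  have hf : ∀ x ∈ LinearMap.ker (f ^ n), f x ∈ LinearMap.ker (f ^ n) := by
    intro x hx
    rw [LinearMap.mem_ker] at hx ⊢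
    rw [← Module.End.mul_apply, ← pow_succ, pow_succ', Module.End.mul_apply, hx, map_zero]
  refine ⟨LinearMap.ker (f ^ n), f.restrict hf,
    c ∘ₗ (Submodule.subtype _).prodMap LinearMap.id, ?_, ⟨n, ?_⟩, .of_forall ?_ ?_ ?_ ?_⟩
  · exact ⟨Submodule.subtype _, Submodule.projectionOnto _ _ hc', by
      ext x; simp⟩
  · rw [Module.End.pow_restrict]
    ext x
    exact x.2
  · intro x y hxy
    apply Subtype.ext
    apply h.inj
    exact Prod.ext (congrArg Subtype.val (congrArg Prod.fst hxy)) (congrArg Prod.snd hxy :)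
  · intro z
    obtain ⟨⟨x, p⟩, rfl⟩ := h.surj z
    have hx : x ∈ LinearMap.ker (f ^ n) ⊔ LinearMap.range (f ^ n) := by
      rw [hc'.sup_eq_top]; trivial
    have hr : LinearMap.range (f ^ n) ≤ LinearMap.range (f ^ (n + 1)) := by
      rintro _ ⟨w, rfl⟩
      have hw : w ∈ LinearMap.ker (f ^ (n + 1)) ⊔ LinearMap.range (f ^ (n + 1)) := by
        rw [hc.sup_eq_top]; trivial
      obtain ⟨a, ha, _, ⟨b, rfl⟩, rfl⟩ := Submodule.mem_sup.mp hw
      refine ⟨(f ^ n) b, ?_⟩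
      rw [map_add, LinearMap.mem_ker.mp (hk ha), zero_add, ← Module.End.mul_apply,
        ← Module.End.mul_apply, ← pow_add, ← pow_add, add_comm]
    obtain ⟨a, ha, b, hb, rfl⟩ := Submodule.mem_sup.mp hx
    obtain ⟨y, rfl⟩ := hr hb
    rw [pow_succ', Module.End.mul_apply]
    refine ⟨(⟨a, ha⟩, p - g ((f ^ n) y)), ?_⟩
    have := h.comp_apply ((f ^ n) y)
    have h2 : (a + f ((f ^ n) y), p) = (a, p - g ((f ^ n) y)) + (f.prod g) ((f ^ n) y) := by
      simp
    rw [h2, map_add, this, add_zero]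
    rfl
  · intro x
    exact h.comp_apply x.1
  · rintro ⟨x, p⟩ hx
    obtain ⟨y, hy⟩ := h.exists_of_eq_zero hx
    have hy1 : f y = x := congrArg Prod.fst hy
    refine ⟨⟨y, hk ?_⟩, Prod.ext (Subtype.ext hy1) (congrArg Prod.snd hy :)⟩
    rw [LinearMap.mem_ker, pow_succ, Module.End.mul_apply, hy1]
    exact x.2

end

end ProjectiveDimension

section AddClosure

variable {Λ : Type u} [Ring Λ]

section

variable {X Y Z W : Type u} [AddCommGroup X] [Module Λ X] [AddCommGroup Y] [Module Λ Y]
  [AddCommGroup Z] [Module Λ Z] [AddCommGroup W] [Module Λ W]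

theorem IsSummand.trans (h : IsSummand (Λ := Λ) X Y) (h' : IsSummand (Λ := Λ) Y Z) :
    IsSummand (Λ := Λ) X Z := by
  obtain ⟨i, p, h⟩ := h
  obtain ⟨j, q, h'⟩ := h'
  refine ⟨j ∘ₗ i, p ∘ₗ q, LinearMap.ext fun x => ?_⟩
  exact (congrArg p (LinearMap.congr_fun h' (i x))).trans (LinearMap.congr_fun h x)

theorem IsSummand.of_equiv (e : X ≃ₗ[Λ] Y) : IsSummand (Λ := Λ) X Y :=
  ⟨e, e.symm, by ext; simp⟩

theorem IsSummand.fst : IsSummand (Λ := Λ) X (X × Y) :=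
  ⟨LinearMap.inl Λ X Y, LinearMap.fst Λ X Y, rfl⟩

theorem IsSummand.snd : IsSummand (Λ := Λ) Y (X × Y) :=
  ⟨LinearMap.inr Λ X Y, LinearMap.snd Λ X Y, rfl⟩

theorem IsSummand.prodMap (h : IsSummand (Λ := Λ) X Y) (h' : IsSummand (Λ := Λ) Z W) :
    IsSummand (Λ := Λ) (X × Z) (Y × W) := by
  obtain ⟨i, p, h⟩ := h
  obtain ⟨j, q, h'⟩ := h'
  refine ⟨i.prodMap j, p.prodMap q, LinearMap.ext fun x => ?_⟩
  exact Prod.ext (LinearMap.congr_fun h x.1) (LinearMap.congr_fun h' x.2)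

theorem IsSummand.pi (h : IsSummand (Λ := Λ) X Y) (k : ℕ) :
    IsSummand (Λ := Λ) (Fin k → X) (Fin k → Y) := by
  obtain ⟨i, p, h⟩ := h
  refine ⟨i.compLeft (Fin k), p.compLeft (Fin k), LinearMap.ext fun x => ?_⟩
  exact funext fun t => LinearMap.congr_fun h (x t)

theorem IsSummand.finite (h : IsSummand (Λ := Λ) X Y) [Module.Finite Λ Y] : Module.Finite Λ X := by
  obtain ⟨i, p, h⟩ := h
  exact Module.Finite.of_surjective p fun x => ⟨i x, LinearMap.congr_fun h x⟩

end

variable {N N' M X Y : ModuleCat.{u} Λ}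

theorem IsSummand.inAdd (h : IsSummand (Λ := Λ) X Y) (h' : InAdd Λ N Y) : InAdd Λ N X := by
  obtain ⟨k, h'⟩ := h'
  exact ⟨k, h.trans h'⟩

theorem InAdd.refl (N : ModuleCat.{u} Λ) : InAdd Λ N N :=
  ⟨1, IsSummand.of_equiv (LinearEquiv.funUnique (Fin 1) Λ N).symm⟩

theorem InAdd.trans (h : InAdd Λ N M) (h' : InAdd Λ M X) : InAdd Λ N X := by
  obtain ⟨k, h⟩ := h
  obtain ⟨l, h'⟩ := h'
  exact ⟨l * k, IsSummand.trans h' ((IsSummand.pi h l).trans (.of_equiv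
    ((LinearEquiv.curry Λ N (Fin l) (Fin k)).symm ≪≫ₗ
      LinearEquiv.funCongrLeft Λ N finProdFinEquiv.symm)))⟩

theorem InAdd.prod (h : InAdd Λ N X) (h' : InAdd Λ N Y) :
    InAdd Λ N (ModuleCat.of Λ (X × Y)) := by
  obtain ⟨k, h⟩ := h
  obtain ⟨l, h'⟩ := h'
  exact ⟨k + l, (IsSummand.prodMap h h').trans (.of_equiv
    ((LinearEquiv.sumArrowLequivProdArrow (Fin k) (Fin l) Λ N).symm ≪≫ₗ
      LinearEquiv.funCongrLeft Λ N finSumFinEquiv.symm))⟩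

theorem InAdd.inl (h : InAdd Λ N X) : InAdd Λ (ModuleCat.of Λ (N × N')) X :=
  InAdd.trans (M := N) (IsSummand.inAdd .fst (.refl _)) h

theorem InAdd.inr (h : InAdd Λ N' X) : InAdd Λ (ModuleCat.of Λ (N × N')) X :=
  InAdd.trans (M := N') (IsSummand.inAdd .snd (.refl _)) h

theorem InAdd.finite (h : InAdd Λ N X) [Module.Finite Λ N] : Module.Finite Λ X := by
  obtain ⟨k, h⟩ := h
  exact IsSummand.finite h

theorem InAdd.of_projective [Module.Projective Λ X] [Module.Finite Λ X] :
    InAdd Λ (ModuleCat.of Λ Λ) X := by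
  obtain ⟨k, f, hf⟩ := Module.Finite.exists_fin' Λ X
  obtain ⟨i, hi⟩ := Module.projective_lifting_property f LinearMap.id hf
  exact ⟨k, i, f, hi⟩

theorem IsGSyz.pi {K M : ModuleCat.{u} Λ} (h : IsGSyz K M) (k : ℕ) :
    IsGSyz (ModuleCat.of Λ (Fin k → K)) (ModuleCat.of Λ (Fin k → M)) := by
  obtain ⟨P, i, g, h1, h2, h⟩ := h
  refine ⟨ModuleCat.of Λ (Fin k → P), i.compLeft (Fin k), g.compLeft (Fin k),
    Module.Projective.of_equiv (DFinsupp.linearEquivFunOnFintype (M := fun _ : Fin k => P)),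
    inferInstanceAs (Module.Finite Λ (Fin k → P)), .of_forall ?_ ?_ ?_ ?_⟩
  · exact fun x y hxy => funext fun t => h.inj (congrFun hxy t)
  · intro y
    choose x hx using fun t => h.surj (y t)
    exact ⟨x, funext hx⟩
  · exact fun x => funext fun t => h.comp_apply (x t)
  · intro y hy
    choose x hx using fun t => h.exists_of_eq_zero (congrFun hy t)
    exact ⟨x, funext hx⟩

/-- Syzygies of modules in `add N` lie in `add N₁` for a fixed `N₁`. -/
theorem IsGSyz.exists_inAdd [IsNoetherianRing Λ] (N : ModuleCat.{u} Λ) [Module.Finite Λ N] :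
    ∃ N₁ : ModuleCat.{u} Λ, Module.Finite Λ N₁ ∧
      ∀ X K, InAdd Λ N X → IsGSyz K X → InAdd Λ N₁ K := by
  obtain ⟨N', hN'⟩ := IsGSyz.exists N
  have := hN'.finite
  refine ⟨ModuleCat.of Λ (N' × Λ), inferInstanceAs (Module.Finite Λ (N' × Λ)), fun X K hX hK => ?_⟩
  obtain ⟨k, i, p, hip⟩ := hX
  obtain ⟨e, -⟩ := LinearMap.exists_equiv_prod_of_comp_eq_id hip
  have hC : Module.Finite Λ (ModuleCat.of Λ (LinearMap.ker p)) :=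
    inferInstanceAs (Module.Finite Λ (LinearMap.ker p))
  obtain ⟨C, hC⟩ := IsGSyz.exists (ModuleCat.of Λ (LinearMap.ker p))
  obtain ⟨P, Q, h1, h2, h3, h4, ⟨f⟩⟩ := (hK.prod hC).stabIso (hN'.pi k) (StabIso.of_equiv e.symm)
  refine ((IsSummand.fst (Y := C)).trans ((IsSummand.fst (Y := P)).trans (.of_equiv f))).inAdd
    (Y := ModuleCat.of Λ ((Fin k → N') × Q)) (InAdd.prod (X := ModuleCat.of Λ (Fin k → N')) ?_ ?_)
  · exact InAdd.inl (N' := ModuleCat.of Λ Λ) ⟨k, LinearMap.id, LinearMap.id, rfl⟩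
  · exact InAdd.inr (N' := ModuleCat.of Λ Λ) InAdd.of_projective

theorem IsNthGSyz.exists_inAdd [IsNoetherianRing Λ] (n : ℕ) (N : ModuleCat.{u} Λ)
    [Module.Finite Λ N] : ∃ N₁ : ModuleCat.{u} Λ, Module.Finite Λ N₁ ∧
      ∀ X K, InAdd Λ N X → IsNthGSyz n K X → InAdd Λ N₁ K := by
  induction n with
  | zero => exact ⟨N, ‹_›, fun X K hX ⟨e⟩ => (IsSummand.of_equiv e).inAdd hX⟩
  | succ n ih =>
    obtain ⟨N', hN', h'⟩ := ih
    obtain ⟨N₁, hN₁, h₁⟩ := IsGSyz.exists_inAdd N'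
    exact ⟨N₁, hN₁, fun X K hX ⟨K', hK', hK⟩ => h₁ K' K (h' X K' hX hK') hK⟩

variable [IsNoetherianRing Λ] [IsArtinianRing Λ]

/-- The finite projective dimensions of modules in `add W` are bounded. -/
theorem InAdd.exists_pdLT (W : ModuleCat.{u} Λ) [Module.Finite Λ W] :
    ∃ n, ∀ X, InAdd Λ W X → (∃ k, PdLT Λ X k) → PdLT Λ X n := by
  obtain ⟨l, hl⟩ := ModuleCat.exists_list_indec_summand W
  have hn : ∃ n, ∀ Y ∈ l, (∃ k, PdLT Λ Y k) → PdLT Λ Y n := by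
    clear hl
    induction l with
    | nil => exact ⟨0, by simp⟩
    | cons Y l ih =>
      obtain ⟨n, hn⟩ := ih
      by_cases hY : ∃ k, PdLT Λ Y k
      · obtain ⟨k, hk⟩ := hY
        refine ⟨max k n, fun Z hZ hZ' => ?_⟩
        rcases List.mem_cons.mp hZ with rfl | hZ
        · exact hk.mono (le_max_left _ _)
        · exact (hn Z hZ hZ').mono (le_max_right _ _)
      · refine ⟨n, fun Z hZ hZ' => ?_⟩
        rcases List.mem_cons.mp hZ with rfl | hZ
        · exact absurd hZ' hY
        · exact hn Z hZ hZ'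
  obtain ⟨n, hn⟩ := hn
  refine ⟨n, fun X hX => ?_⟩
  have := hX.finite
  revert hX
  refine ModuleCat.indec_induction (Q := fun X => InAdd Λ W X → (∃ k, PdLT Λ X k) → PdLT Λ X n)
    ?_ ?_ ?_ ?_ X
  · rintro M N e hM hN ⟨k, hk⟩
    exact (hM ((IsSummand.of_equiv e).inAdd hN) ⟨k, hk.equiv e.symm⟩).equiv e
  · intro M hM _ _
    exact PdLT.mono (CategoryTheory.Limits.IsZero.hasProjectiveDimensionLT_zero
      (ModuleCat.isZero_of_subsingleton M)) (Nat.zero_le n)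
  · rintro M N hM hN hMN ⟨k, hk⟩
    exact (hM (IsSummand.fst.inAdd hMN) ⟨k, hk.of_summand .fst⟩).prod
      (hN (IsSummand.snd.inAdd hMN) ⟨k, hk.of_summand .snd⟩)
  · rintro M h1 h2 hM hMW ⟨k, hk⟩
    obtain ⟨Y, hY, ⟨e⟩⟩ := hl M h1 h2 hM (IsSummand.of_pi hM hMW)
    exact (hn Y hY ⟨k, hk.equiv e⟩).equiv e.symm

/-- The stable classes of modules in `add V` are sums of finitely many classes. -/
theorem StabClass.exists_finite (V : ModuleCat.{u} Λ) [Module.Finite Λ V] :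
    ∃ S : Set (StabClass Λ), S.Finite ∧ ∀ (X : ModuleCat.{u} Λ) (hX : Module.Finite Λ X),
      InAdd Λ V X → StabClass.mk X hX ∈ AddSubmonoid.closure S := by
  obtain ⟨l, hl⟩ := ModuleCat.exists_list_indec_summand V
  refine ⟨⋃ Y ∈ {Y | Y ∈ l}, {c | ∃ h, c = StabClass.mk Y h},
    Set.Finite.biUnion (List.finite_toSet l) fun Y _ => Set.Subsingleton.finite ?_, fun X hX => ?_⟩
  · rintro _ ⟨h, rfl⟩ _ ⟨h', rfl⟩
    rfl
  revert hX
  suffices h : InAdd Λ V X → ∀ hX, StabClass.mk X hX ∈ AddSubmonoid.closure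
      (⋃ Y ∈ {Y | Y ∈ l}, {c | ∃ h, c = StabClass.mk Y h}) from fun hX h' => h h' hX
  intro hX
  have := hX.finite
  revert hX
  refine ModuleCat.indec_induction (Q := fun X => InAdd Λ V X → ∀ hX, StabClass.mk X hX ∈
    AddSubmonoid.closure (⋃ Y ∈ {Y | Y ∈ l}, {c | ∃ h, c = StabClass.mk Y h})) ?_ ?_ ?_ ?_ X
  · intro M N e hM hN hN'
    rw [← StabClass.mk_eq_mk (hM := Module.Finite.equiv e.symm).mpr (.of_equiv e)]
    exact hM ((IsSummand.of_equiv e).inAdd hN) _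
  · intro M hM _ hM'
    rw [StabClass.mk_eq_zero]
    exact zero_mem _
  · intro M N hM hN hMN h
    have h1 : Module.Finite Λ M := IsSummand.finite (Y := M × N) .fst
    have h2 : Module.Finite Λ N := IsSummand.finite (Y := M × N) .snd
    rw [StabClass.mk_prod h1 h2]
    exact add_mem (hM (IsSummand.fst.inAdd hMN) _) (hN (IsSummand.snd.inAdd hMN) _)
  · intro M h1 h2 hM hMV hM'
    obtain ⟨Y, hY, ⟨e⟩⟩ := hl M h1 h2 hM (IsSummand.of_pi hM hMV)
    refine AddSubmonoid.subset_closure (Set.mem_biUnion hY ⟨Module.Finite.equiv e, ?_⟩)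
    exact StabClass.mk_eq_mk.mpr (.of_equiv e)

/-- The Igusa–Todorov bound: cokernels of monomorphisms between modules in `add V` have
bounded finite projective dimension. -/
theorem IsSES.exists_pdLT (V : ModuleCat.{u} Λ) [Module.Finite Λ V] :
    ∃ n, ∀ (K L Y : ModuleCat.{u} Λ) (i : K →ₗ[Λ] L) (g : L →ₗ[Λ] Y), InAdd Λ V K → InAdd Λ V L →
      IsSES i g → (∃ k, PdLT Λ Y k) → PdLT Λ Y n := by
  obtain ⟨S, hS, hSV⟩ := StabClass.exists_finite V
  obtain ⟨n, hn⟩ := AddMonoidHom.exists_iterate_eq_of_finite StabClass.syz S hS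
  obtain ⟨V₁, hV₁, hVn⟩ := IsNthGSyz.exists_inAdd n V
  have : Module.Finite Λ (ModuleCat.of Λ (V₁ × Λ)) := inferInstanceAs (Module.Finite Λ (V₁ × Λ))
  obtain ⟨b, hb⟩ := InAdd.exists_pdLT (ModuleCat.of Λ (V₁ × Λ))
  refine ⟨b + n + 1, fun K L Y i g hK hL h ⟨N, hN⟩ => ?_⟩
  have hKf := hK.finite
  have hLf := hL.finite
  have hYf : Module.Finite Λ Y := Module.Finite.of_surjective g h.surj
  have hst : ∀ {m : ℕ} {K' L' : ModuleCat.{u} Λ} (hK' : IsNthGSyz m K' K) (hL' : IsNthGSyz m L' L),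
      StabClass.syz^[m] (StabClass.mk K hKf) = StabClass.syz^[m] (StabClass.mk L hLf) ↔
        StabIso K' L' := by
    intro m K' L' hK' hL'
    rw [StabClass.iterate_syz_mk hK'.finite hKf hK', StabClass.iterate_syz_mk hL'.finite hLf hL',
      StabClass.mk_eq_mk]
  have hKL : StabClass.syz^[n] (StabClass.mk K hKf) = StabClass.syz^[n] (StabClass.mk L hLf) := by
    refine hn _ (hSV K hKf hK) _ (hSV L hLf hL) N ?_
    obtain ⟨K', hK'⟩ := IsNthGSyz.exists N K
    obtain ⟨Y', hY'⟩ := IsNthGSyz.exists N Y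
    obtain ⟨L', i', g', hL', h'⟩ := IsNthGSyz.horseshoe N h hK' hY'
    rw [hst hK' hL']
    have : Module.Projective Λ Y' := PdLT.projective_iff.mp
      (hY'.pdLT_iff (n := 0).mp (hN.mono (by lia)))
    have := hY'.finite
    obtain ⟨e⟩ := h'.nonempty_equiv_prod
    exact StabIso.trans ⟨Y', ModuleCat.of Λ PUnit.{u + 1}, ‹_›, ‹_›,
      inferInstanceAs (Module.Projective Λ PUnit.{u + 1}),
      inferInstanceAs (Module.Finite Λ PUnit.{u + 1}),
      ⟨LinearEquiv.prodUnique.symm⟩⟩ (StabIso.of_equiv (M := ModuleCat.of Λ (K' × Y')) e.symm)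
  obtain ⟨K', hK'⟩ := IsNthGSyz.exists n K
  obtain ⟨Y', hY'⟩ := IsNthGSyz.exists n Y
  obtain ⟨L', i', g', hL', h'⟩ := IsNthGSyz.horseshoe n h hK' hY'
  obtain ⟨P, Q, h1, h2, h3, h4, ⟨e⟩⟩ := (hst hK' hL').mp hKL
  have hY'N : PdLT Λ Y' (N + 1) := hY'.pdLT_iff.mp (hN.mono (by lia))
  have hs := (h'.prod_left (N := P)).prod_middle (N := Q)
  obtain ⟨i₁, c₁, hs⟩ : ∃ (i₁ : (K' × P) →ₗ[Λ] ((K' × P) × P)) (c₁ : ((K' × P) × P) →ₗ[Λ] (Y' × Q)),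
      IsSES i₁ c₁ :=
    ⟨_, _, hs.equiv_middle (LinearEquiv.prodAssoc Λ L' P Q ≪≫ₗ
      (LinearEquiv.refl Λ L').prodCongr (LinearEquiv.prodComm Λ P Q) ≪≫ₗ
      (LinearEquiv.prodAssoc Λ L' Q P).symm ≪≫ₗ e.symm.prodCongr (LinearEquiv.refl Λ P))⟩
  have hs' : IsSES ((LinearMap.fst Λ _ _ ∘ₗ i₁).prod (LinearMap.snd Λ _ _ ∘ₗ i₁)) c₁ := hs
  have := hK'.finite
  obtain ⟨T, f, c, hT, hf, hTs⟩ := hs'.exists_isNilpotent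
  have hTb : PdLT Λ T b := by
    refine hb (ModuleCat.of Λ T) (hT.inAdd (Y := ModuleCat.of Λ (K' × P))
      (InAdd.prod (InAdd.inl (N' := ModuleCat.of Λ Λ) (hVn K K' hK hK'))
        (InAdd.inr (N' := ModuleCat.of Λ Λ) InAdd.of_projective)))
      ⟨N + 1, hTs.pdLT_of_isNilpotent hf (by lia) (hY'N.prod (.of_projective (by lia)))⟩
  have hYb : PdLT Λ Y' (b + 1) := (hTs.pdLT_right hTb ((hTb.mono (by lia)).prod
    (.of_projective (by lia)))).of_summand .fst
  exact hY'.pdLT_iff.mpr hYb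

end AddClosure

section ProjectiveCovers

variable {Λ : Type u} [Ring Λ]

theorem IsSyzygyOf.isGSyz {K M : ModuleCat.{u} Λ} (h : IsSyzygyOf Λ K M) : IsGSyz K M := by
  obtain ⟨P, g, h1, h2, hg, -, ⟨e⟩⟩ := h
  exact ⟨P, _, g, h1, h2, (IsSES.of_surjective hg).equiv_left e⟩

theorem IsNthSyzygy.isNthGSyz {n : ℕ} {K M : ModuleCat.{u} Λ} (h : IsNthSyzygy Λ n K M) :
    IsNthGSyz n K M := by
  induction n generalizing K with
  | zero => exact h
  | succ n ih =>
    obtain ⟨K', h', h⟩ := h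
    exact ⟨K', ih h', h.isGSyz⟩

theorem IsSuperfluous.apply_mem_jacobsonRad {P : ModuleCat.{u} Λ} {N : Submodule Λ P}
    (h : IsSuperfluous Λ N) (φ : P →ₗ[Λ] Λ) {x : P} (hx : x ∈ N) : φ x ∈ jacobsonRad Λ := by
  refine Submodule.mem_sInf.mpr fun I hI => ?_
  by_contra hφ
  have hI' : I < I ⊔ Submodule.map φ N :=
    lt_of_le_of_ne le_sup_left fun h => hφ (h ▸ Submodule.mem_sup_right ⟨x, hx, rfl⟩)
  have htop := (Ideal.isMaximal_def.mp hI).2 _ hI'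
  have hL : Submodule.comap φ I ⊔ N = ⊤ := by
    refine eq_top_iff.mpr fun y _ => ?_
    have hy : φ y ∈ I ⊔ Submodule.map φ N := by rw [htop]; trivial
    obtain ⟨a, ha, _, ⟨z, hz, rfl⟩, hab⟩ := Submodule.mem_sup.mp hy
    refine Submodule.mem_sup.mpr ⟨y - z, ?_, z, hz, sub_add_cancel _ _⟩
    rw [Submodule.mem_comap, map_sub, ← hab, add_sub_cancel_right]
    exact ha
  have hx' : x ∈ Submodule.comap φ I := by rw [h _ hL]; trivial
  exact hφ hx'

variable [IsNoetherianRing Λ] [IsArtinianRing Λ]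

/-- Projective covers of finitely generated modules exist. -/
theorem exists_projectiveCover (M : ModuleCat.{u} Λ) [Module.Finite Λ M] :
    ∃ (P : ModuleCat.{u} Λ) (g : P →ₗ[Λ] M), Module.Projective Λ P ∧ Module.Finite Λ P ∧
      Function.Surjective g ∧ IsSuperfluous Λ (LinearMap.ker g) := by
  obtain ⟨n, f, hf⟩ := Module.Finite.exists_fin' Λ M
  obtain ⟨L, hL, hmin⟩ := WellFounded.has_min (wellFounded_lt (α := Submodule Λ (Fin n → Λ)))
    {L | L ⊔ LinearMap.ker f = ⊤} ⟨⊤, top_sup_eq _⟩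
  have hmin' : ∀ L', L' ⊔ LinearMap.ker f = ⊤ → L' ≤ L → L' = L := fun L' h h' =>
    eq_of_le_of_not_lt h' (hmin L' h)
  have hdec : ∀ x, ∃ l : L, f l = f x := by
    intro x
    have hx : x ∈ L ⊔ LinearMap.ker f := by rw [Set.mem_ofPred_eq.mp hL]; trivial
    obtain ⟨l, hl, y, hy, rfl⟩ := Submodule.mem_sup.mp hx
    exact ⟨⟨l, hl⟩, by rw [map_add, LinearMap.mem_ker.mp hy, add_zero]⟩
  have hg : Function.Surjective (f ∘ₗ L.subtype) := fun y => by
    obtain ⟨x, rfl⟩ := hf y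
    exact hdec x
  have hsup : ∀ L' : Submodule Λ (Fin n → Λ), (∀ x, ∃ l ∈ L', f l = f x) →
      L' ⊔ LinearMap.ker f = ⊤ := by
    intro L' h
    refine eq_top_iff.mpr fun x _ => ?_
    obtain ⟨l, hl, hlx⟩ := h x
    exact Submodule.mem_sup.mpr ⟨l, hl, x - l, by simp [hlx], by abel⟩
  obtain ⟨h, hh⟩ := Module.projective_lifting_property (f ∘ₗ L.subtype) f hg
  have hh' : ∀ x, f (h x) = f x := fun x => LinearMap.congr_fun hh x
  have hsurj : Function.Surjective (h ∘ₗ L.subtype) := by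
    have := hmin' (Submodule.map (L.subtype ∘ₗ h) L) (hsup _ fun x => by
      obtain ⟨l, hl⟩ := hdec x
      exact ⟨h l, ⟨l, l.2, rfl⟩, (hh' l).trans hl⟩) (by
      rintro _ ⟨x, -, rfl⟩
      exact (h x).2)
    intro y
    obtain ⟨x, hx, hxy⟩ := this.ge y.2
    exact ⟨⟨x, hx⟩, Subtype.ext hxy⟩
  let e := LinearEquiv.ofBijective _ (IsNoetherian.bijective_of_surjective_endomorphism _ hsurj)
  have hproj : Module.Projective Λ L :=
    Module.Projective.of_split L.subtype (e.symm.toLinearMap ∘ₗ h)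
      (LinearMap.ext fun x => e.symm_apply_apply x)
  refine ⟨ModuleCat.of Λ L, f ∘ₗ L.subtype, hproj, inferInstanceAs (Module.Finite Λ L), hg,
    fun L' hL' => ?_⟩
  have hmap : Submodule.map L.subtype L' = L := by
    refine hmin' _ (hsup _ fun x => ?_) (Submodule.map_subtype_le L L')
    obtain ⟨l, hl⟩ := hdec x
    have hl' : l ∈ L' ⊔ LinearMap.ker (f ∘ₗ L.subtype) := by
      rw [show L' ⊔ LinearMap.ker (f ∘ₗ L.subtype) = ⊤ from hL']; trivial
    obtain ⟨a, ha, b, hb, rfl⟩ := Submodule.mem_sup.mp hl'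
    have hb' : f (b : Fin n → Λ) = 0 := hb
    refine ⟨a, ⟨a, ha, rfl⟩, ?_⟩
    rw [← hl, Submodule.coe_add, map_add, hb', add_zero]
  refine eq_top_iff.mpr fun x _ => ?_
  obtain ⟨y, hy, hxy⟩ := hmap.ge x.2
  rwa [← show y = x from Subtype.ext hxy]

theorem IsNthSyzygy.exists (n : ℕ) (M : ModuleCat.{u} Λ) [Module.Finite Λ M] :
    ∃ K, IsNthSyzygy Λ n K M := by
  induction n with
  | zero => exact ⟨M, ⟨LinearEquiv.refl Λ M⟩⟩
  | succ n ih =>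
    obtain ⟨K, hK⟩ := ih
    have := hK.isNthGSyz.finite
    obtain ⟨P, g, h1, h2, hg, hs⟩ := exists_projectiveCover K
    exact ⟨ModuleCat.of Λ (LinearMap.ker g), K, hK, P, g, h1, h2, hg, hs, ⟨LinearEquiv.refl Λ _⟩⟩

/-- Every finitely generated module has a second syzygy that is the solution set of a system of
linear equations with all coordinates of all solutions in the radical. -/
theorem exists_second_syzygy (M : ModuleCat.{u} Λ) [Module.Finite Λ M] :
    ∃ (k n : ℕ) (c : Fin k ⊕ Fin n → Fin k → Λ) (Y : Submodule Λ (Fin k → Λ)),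
      (∀ y, y ∈ Y ↔ ∀ j, ∑ t, y t * c j t = 0) ∧ (∀ y ∈ Y, ∀ t, y t ∈ jacobsonRad Λ) ∧
      IsNthGSyz 2 (ModuleCat.of Λ Y) M := by
  obtain ⟨n, f, hf⟩ := Module.Finite.exists_fin' Λ M
  have : Module.Finite Λ (ModuleCat.of Λ (LinearMap.ker f)) :=
    inferInstanceAs (Module.Finite Λ (LinearMap.ker f))
  obtain ⟨P, g, h1, h2, hg, hs⟩ := exists_projectiveCover (ModuleCat.of Λ (LinearMap.ker f))
  obtain ⟨k, p, hp⟩ := Module.Finite.exists_fin' Λ P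
  obtain ⟨i, hi⟩ := Module.projective_lifting_property p LinearMap.id hp
  have hi' : ∀ x, p (i x) = x := fun x => LinearMap.congr_fun hi x
  let G : (Fin k → Λ) →ₗ[Λ] (Fin n → Λ) := (LinearMap.ker f).subtype ∘ₗ g ∘ₗ p
  have hG : ∀ y, G y = 0 ↔ g (p y) = 0 := fun y => ⟨fun h => Subtype.ext h, fun h =>
    congrArg Subtype.val h⟩
  let F : Fin k ⊕ Fin n → (Fin k → Λ) →ₗ[Λ] Λ :=
    Sum.elim (fun t => LinearMap.proj t ∘ₗ (LinearMap.id - i ∘ₗ p)) (fun t => LinearMap.proj t ∘ₗ G)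
  let Y := LinearMap.ker (LinearMap.id - i ∘ₗ p) ⊓ LinearMap.ker G
  have hYm : ∀ y, y ∈ Y ↔ i (p y) = y ∧ g (p y) = 0 := by
    intro y
    rw [Submodule.mem_inf, LinearMap.mem_ker, LinearMap.mem_ker, hG, LinearMap.sub_apply,
      sub_eq_zero, eq_comm]
    rfl
  refine ⟨k, n, fun j t => F j (Pi.single t 1), Y, fun y => ?_, fun y hy t => ?_, ?_⟩
  · have hF : ∀ j, ∑ t, y t * F j (Pi.single t 1) = F j y := by
      intro j
      conv_rhs => rw [pi_eq_sum_univ' y]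
      simp [map_sum]
    simp only [hF]
    constructor
    · rintro ⟨ha, hb⟩ (t | t)
      · exact congrFun (LinearMap.mem_ker.mp ha) t
      · exact congrFun (LinearMap.mem_ker.mp hb) t
    · exact fun h => ⟨LinearMap.mem_ker.mpr (funext fun t => h (.inl t)),
        LinearMap.mem_ker.mpr (funext fun t => h (.inr t))⟩
  · obtain ⟨ha, hb⟩ := (hYm y).mp hy
    rw [← ha]
    exact hs.apply_mem_jacobsonRad (LinearMap.proj t ∘ₗ i) hb
  · let e : Y ≃ₗ[Λ] LinearMap.ker g := LinearEquiv.ofLinearMap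
      ((p ∘ₗ Y.subtype).codRestrict _ fun y => ((hYm y).mp y.2).2)
      ((i ∘ₗ (LinearMap.ker g).subtype).codRestrict _ fun x => (hYm _).mpr
        ⟨by simp [hi'], by simp [hi']⟩)
      (LinearMap.ext fun x => Subtype.ext (hi' x))
      (LinearMap.ext fun y => Subtype.ext ((hYm y).mp y.2).1)
    exact ⟨ModuleCat.of Λ (LinearMap.ker f), ⟨M, ⟨LinearEquiv.refl Λ M⟩,
      ModuleCat.of Λ (Fin n → Λ), _, f, inferInstanceAs (Module.Projective Λ (Fin n → Λ)),
      inferInstanceAs (Module.Finite Λ (Fin n → Λ)), IsSES.of_surjective hf⟩,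
      P, _, g, h1, h2, (IsSES.of_surjective hg).equiv_left e⟩

end ProjectiveCovers

section Subalgebras

variable {R A : Type u} [CommRing R] [Ring A] [Algebra R A] {S T : Subalgebra R A}

theorem InAdd.restrictScalars {N X : ModuleCat.{u} A} (h : InAdd A N X) :
    InAdd S (ModuleCat.of S N) (ModuleCat.of S X) := by
  obtain ⟨k, i, p, h⟩ := h
  exact ⟨k, i.restrictScalars S, p.restrictScalars S,
    LinearMap.ext fun x => LinearMap.congr_fun h x⟩

theorem exists_isSES_of_subalgebra (hST : S ≤ T)
    (hrad : ∀ x ∈ radSet S, ∀ a ∈ T, a * x ∈ radSet S) (Q : Set A)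
    (hQ : ∀ p ∈ Q, ∀ a : A, a * p ∈ T) {k : ℕ} {ι : Type} (c : ι → Fin k → S)
    (Y : Submodule S (Fin k → S)) (hY : ∀ y, y ∈ Y ↔ ∀ j, ∑ t, y t * c j t = 0)
    (hYrad : ∀ y ∈ Y, ∀ t, y t ∈ jacobsonRad S) :
    ∃ (D : Submodule A (Fin k → A)) (Z : ModuleCat.{u} S) (sm : T → Z → Z) (i : D →ₗ[S] Y)
      (g : Y →ₗ[S] Z), IsSES i g ∧
        (∀ v : Z, sm 1 v = v) ∧
        (∀ (a b : T) (v : Z), sm (a * b) v = sm a (sm b v)) ∧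
        (∀ (a : T) (v w : Z), sm a (v + w) = sm a v + sm a w) ∧
        (∀ (a b : T) (v : Z), sm (a + b) v = sm a v + sm b v) ∧
        (∀ (a : T) (hb : (a : A) ∈ S) (v : Z), sm a v = (⟨(a : A), hb⟩ : S) • v) ∧
        ∀ p ∈ Q, ∀ (hm : p ∈ T) (v : Z), sm ⟨p, hm⟩ v = 0 := by
  let YT : Submodule T (Fin k → A) :=
    { carrier := {v | (∀ t, v t ∈ radSet S) ∧ ∀ j, ∑ t, v t * (c j t : A) = 0}
      add_mem' := by
        rintro v w ⟨hv, hv'⟩ ⟨hw, hw'⟩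
        refine ⟨fun t => ?_, fun j => ?_⟩
        · obtain ⟨a, ha, hav⟩ := hv t
          obtain ⟨b, hb, hbw⟩ := hw t
          exact ⟨a + b, add_mem ha hb, by simp [← hav, ← hbw]⟩
        · simp [add_mul, Finset.sum_add_distrib, hv', hw']
      zero_mem' := ⟨fun t => ⟨0, zero_mem _, rfl⟩, fun j => by simp⟩
      smul_mem' := by
        rintro a v ⟨hv, hv'⟩
        refine ⟨fun t => hrad _ (hv t) a a.2, fun j => ?_⟩
        have : ∑ t, (a • v) t * (c j t : A) = a * ∑ t, v t * (c j t : A) := by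
          rw [Finset.mul_sum]
          exact Finset.sum_congr rfl fun t _ => mul_assoc _ _ _
        rw [this, hv', mul_zero] }
  have hYT : ∀ y ∈ Y, (fun t => (y t : A)) ∈ YT := fun y hy =>
    ⟨fun t => ⟨y t, hYrad y hy t, rfl⟩, fun j => by
      simpa using congrArg Subtype.val ((hY y).mp hy j)⟩
  have hYT' : ∀ v ∈ YT, ∃ y ∈ Y, (fun t => (y t : A)) = v := by
    rintro v ⟨hv, hv'⟩
    choose y hy hyv using hv
    exact ⟨y, (hY y).mpr fun j => Subtype.ext (by simpa [hyv] using hv' j), funext hyv⟩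
  let D : Submodule A (Fin k → A) := Submodule.span A {w | ∃ p ∈ Q, ∃ v ∈ YT, w = p • v}
  have hD : ∀ d ∈ D, d ∈ YT := by
    suffices h : ∀ d ∈ D, ∀ a : A, a • d ∈ YT from fun d hd => by simpa using h d hd 1
    intro d hd
    induction hd using Submodule.span_induction with
    | mem w hw =>
      obtain ⟨p, hp, v, hv, rfl⟩ := hw
      intro a
      rw [← mul_smul]
      exact YT.smul_mem ⟨a * p, hQ p hp a⟩ hv
    | zero => intro a; rw [smul_zero]; exact zero_mem _
    | add x y _ _ hx hy => intro a; rw [smul_add]; exact add_mem (hx a) (hy a)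
    | smul b x _ hx => intro a; rw [← mul_smul]; exact hx _
  let DT : Submodule T YT := (D.restrictScalars T).comap YT.subtype
  let ψ : S →+* T := (Subalgebra.inclusion hST).toRingHom
  let mS : Module S (YT ⧸ DT) := Module.compHom _ ψ
  let toYT : Y →+ YT :=
    { toFun := fun y => ⟨fun t => (y.1 t : A), hYT y.1 y.2⟩
      map_zero' := rfl
      map_add' := fun _ _ => rfl }
  let g : Y →ₗ[S] (YT ⧸ DT) :=
    { toFun := fun y => DT.mkQ (toYT y)
      map_add' := fun x y => by rw [map_add, map_add]
      map_smul' := fun b y => DT.mkQ.map_smul (ψ b) (toYT y) }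
  have hDS : ∀ d ∈ D, ∀ t, d t ∈ S := fun d hd t => by
    obtain ⟨x, -, hx⟩ := (hD d hd).1 t
    exact hx ▸ x.2
  let i : D →ₗ[S] Y :=
    { toFun := fun d => ⟨fun t => ⟨d.1 t, hDS d.1 d.2 t⟩, (hY _).mpr fun j =>
        Subtype.ext (by simpa using (hD d.1 d.2).2 j)⟩
      map_add' := fun _ _ => rfl
      map_smul' := fun _ _ => rfl }
  refine ⟨D, ModuleCat.of S (YT ⧸ DT), fun a v => (show YT ⧸ DT from a • (show YT ⧸ DT from v)),
    i, g, .of_forall ?_ ?_ ?_ ?_, fun v => one_smul T (show YT ⧸ DT from v),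
    fun a b v => mul_smul a b (show YT ⧸ DT from v),
    fun a v w => smul_add a (show YT ⧸ DT from v) (show YT ⧸ DT from w),
    fun a b v => add_smul a b (show YT ⧸ DT from v), fun a hb v => rfl, ?_⟩
  · intro x y hxy
    refine Subtype.ext (funext fun t => ?_)
    exact congrArg (fun z : Y => ((z.1 t : S) : A)) hxy
  · intro z
    obtain ⟨⟨v, hv⟩, rfl⟩ := DT.mkQ_surjective z
    obtain ⟨y, hy, rfl⟩ := hYT' v hv
    exact ⟨⟨y, hy⟩, rfl⟩
  · intro d
    exact (Submodule.Quotient.mk_eq_zero DT).mpr d.2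
  · intro y hy
    have : (fun t => (y.1 t : A)) ∈ D := (Submodule.Quotient.mk_eq_zero DT).mp hy
    exact ⟨⟨_, this⟩, rfl⟩
  · intro p hp hm v
    obtain ⟨w, rfl⟩ := DT.mkQ_surjective v
    exact (Submodule.Quotient.mk_eq_zero DT).mpr (Submodule.subset_span ⟨p, hp, w.1, w.2, rfl⟩)

theorem list_prod_ofFn_rev_mul_mem {n : ℕ} (A' : ℕ → Set A) (x : Fin n → A)
    (hx : ∀ (j : Fin n), ∀ a ∈ A' (j + 1), a * x j ∈ A' j) (a : A) (ha : a ∈ A' n) :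
    a * (List.ofFn fun j : Fin n => x j.rev).prod ∈ A' 0 := by
  induction n generalizing a with
  | zero => simpa using ha
  | succ n ih =>
    rw [List.ofFn_succ, List.prod_cons, ← mul_assoc]
    have := ih (fun j => x j.castSucc) (fun j => hx j.castSucc) (a * x (Fin.last n))
      (hx (Fin.last n) a ha)
    simpa [Fin.rev_succ] using this

end Subalgebras

section SubalgebraBound

variable {R A : Type u} [CommRing R] [Ring A] [Algebra R A]

theorem OneSyzygyFinite.exists_inAdd [IsNoetherianRing A] [IsArtinianRing A]
    (h : OneSyzygyFinite A) : ∃ N : ModuleCat.{u} A, Module.Finite A N ∧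
      ∀ (k : ℕ) (D : Submodule A (Fin k → A)), InAdd A N (ModuleCat.of A D) := by
  obtain ⟨N, hN, h⟩ := h
  refine ⟨ModuleCat.of A (N × A), inferInstanceAs (Module.Finite A (N × A)), fun k D => ?_⟩
  have hX : Module.Finite A (ModuleCat.of A ((Fin k → A) ⧸ D)) :=
    inferInstanceAs (Module.Finite A ((Fin k → A) ⧸ D))
  obtain ⟨K, hK⟩ := IsNthSyzygy.exists 1 (ModuleCat.of A ((Fin k → A) ⧸ D))
  have hD : IsNthGSyz 1 (ModuleCat.of A D) (ModuleCat.of A ((Fin k → A) ⧸ D)) :=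
    ⟨_, ⟨LinearEquiv.refl A _⟩, ModuleCat.of A (Fin k → A), D.subtype, D.mkQ,
      inferInstanceAs (Module.Projective A (Fin k → A)),
      inferInstanceAs (Module.Finite A (Fin k → A)),
      .of_forall D.subtype_injective D.mkQ_surjective (fun x => by simp)
        (fun y hy => ⟨⟨y, (Submodule.Quotient.mk_eq_zero D).mp hy⟩, rfl⟩)⟩
  obtain ⟨P, Q, h1, h2, h3, h4, ⟨e⟩⟩ := hD.stabIso hK.isNthGSyz hX hX
    (StabIso.of_equiv (LinearEquiv.refl A _))
  exact (IsSummand.fst.trans (.of_equiv e)).inAdd (Y := ModuleCat.of A (K × Q))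
    (InAdd.prod (InAdd.inl (N' := ModuleCat.of A A) (h _ hX K hK))
      (InAdd.inr (N' := ModuleCat.of A A) InAdd.of_projective))

theorem finFinDim_of_subalgebra [IsNoetherianRing A] [IsArtinianRing A] {S T : Subalgebra R A}
    [IsNoetherianRing S] [IsArtinianRing S] [Module.Finite S A] (hST : S ≤ T)
    (hrad : ∀ x ∈ radSet S, ∀ a ∈ T, a * x ∈ radSet S) (Q : Set A)
    (hQ : ∀ p ∈ Q, ∀ a : A, a * p ∈ T) (hA : OneSyzygyFinite A)
    (hq : SyzygyFiniteClass S (fun X => Module.Finite S X ∧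
      ∃ sm : T → X → X,
        (∀ v : X, sm 1 v = v) ∧
        (∀ (a b : T) (v : X), sm (a * b) v = sm a (sm b v)) ∧
        (∀ (a : T) (v w : X), sm a (v + w) = sm a v + sm a w) ∧
        (∀ (a b : T) (v : X), sm (a + b) v = sm a v + sm b v) ∧
        (∀ (a : T) (hb : (a : A) ∈ S) (v : X), sm a v = (⟨(a : A), hb⟩ : S) • v) ∧
        ∀ p ∈ Q, ∀ (hm : p ∈ T) (v : X), sm ⟨p, hm⟩ v = 0)) :
    FinFinDim S := by
  obtain ⟨N, hN, hND⟩ := hA.exists_inAdd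
  obtain ⟨m, M, hM, hMZ⟩ := hq
  have : Module.Finite S (ModuleCat.of S N) := Module.Finite.trans (R := S) A N
  obtain ⟨V, hV, hVD⟩ := IsNthGSyz.exists_inAdd m (ModuleCat.of S N)
  obtain ⟨M₁, hM₁, hMM⟩ := IsGSyz.exists_inAdd M
  have : Module.Finite S (ModuleCat.of S (M₁ × (ModuleCat.of S (V × S)))) :=
    inferInstanceAs (Module.Finite S (M₁ × (V × S)))
  obtain ⟨n, hn⟩ := IsSES.exists_pdLT (ModuleCat.of S (M₁ × (ModuleCat.of S (V × S))))
  refine ⟨n + m + 2, fun X hX ⟨k, hk⟩ => projDimLE_iff.mpr ?_⟩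
  obtain ⟨l, r, c, Y, hY, hYrad, hYX⟩ := exists_second_syzygy X
  have hYf := hYX.finite
  have hYk : PdLT S Y (k + m + 1) :=
    hYX.pdLT_iff.mp ((projDimLE_iff.mp hk).mono (by lia))
  obtain ⟨D, Z, sm, i, g, h, hsm⟩ := exists_isSES_of_subalgebra hST hrad Q hQ c Y hY hYrad
  have hZ : Module.Finite S Z := Module.Finite.of_surjective g h.surj
  have hD : Module.Finite S (ModuleCat.of S D) := h.finite_left (L := Y)
  obtain ⟨Z', hZ'⟩ := IsNthSyzygy.exists m Z
  have hMZ' := hMZ Z ⟨hZ, sm, hsm⟩ Z' hZ'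
  obtain ⟨D', hD'⟩ := IsNthGSyz.exists m (ModuleCat.of S D)
  obtain ⟨Y', i', g', hY', h'⟩ := IsNthGSyz.horseshoe m (K := ModuleCat.of S D)
    (L := ModuleCat.of S Y) h hD' hZ'.isNthGSyz
  have := hZ'.isNthGSyz.finite
  obtain ⟨W, hW⟩ := IsGSyz.exists Z'
  have hMW := hMM Z' W hMZ' hW
  obtain ⟨P, j, q, h1, h2, hW⟩ := hW
  obtain ⟨a, b, hab⟩ := h'.rotate hW
  have hY'n : PdLT S Y' n := hn W (ModuleCat.of S (D' × P)) Y' a b hMW.inl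
    (InAdd.inr (N' := ModuleCat.of S (V × S)) (InAdd.prod
      (InAdd.inl (N' := ModuleCat.of S S) (hVD _ _ (hND l D).restrictScalars hD'))
      (InAdd.inr (N' := ModuleCat.of S S) InAdd.of_projective)))
    hab ⟨k + 1, hY'.pdLT_iff.mp hYk⟩
  exact hYX.pdLT_iff.mpr (hY'.pdLT_iff.mpr (hY'n.mono (by lia)))

end SubalgebraBound

variable {R : Type u} [CommRing R] [IsArtinianRing R]
  {A : Type u} [Ring A] [Algebra R A] [Module.Finite R A]

/-- Chain of subalgebras `B = A₀ ⊆ ⋯ ⊆ A_s = A` with `I_{i-1}` an ideal of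
`A_{i-1}` which is a left ideal of `A_i`, and `I₀ = rad B`.  If `A` is 1-syzygy-finite and
`A₁/(I_{s-1} ⋯ I₁)` is `B`-syzygy-finite (its modules, restricted to `B`-modules along
`B ⊆ A₁`), then `fin.dim B < ∞`. -/
theorem statement14 (s : ℕ) (hs : 0 < s)
    (A' : Fin (s + 1) → Subalgebra R A)
    (hchain : ∀ j : Fin s, A' j.castSucc ≤ A' j.succ)
    (htop : A' (Fin.last s) = ⊤)
    (I : Fin s → Set A)
    (hIsub : ∀ j : Fin s, I j ⊆ (A' j.castSucc : Set A))
    (hIzero : ∀ j : Fin s, (0 : A) ∈ I j)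
    (hIadd : ∀ j : Fin s, ∀ x ∈ I j, ∀ y ∈ I j, x + y ∈ I j)
    (hIneg : ∀ j : Fin s, ∀ x ∈ I j, -x ∈ I j)
    (hIright : ∀ j : Fin s, ∀ x ∈ I j, ∀ b ∈ A' j.castSucc, x * b ∈ I j)
    (hIleft : ∀ j : Fin s, ∀ x ∈ I j, ∀ a ∈ A' j.succ, a * x ∈ I j)
    (hI0 : I ⟨0, hs⟩ = radSet (A' 0))
    (h1 : OneSyzygyFinite A)
    (hq : SyzygyFiniteClass ↥(A' 0) (fun X => Module.Finite ↥(A' 0) X ∧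
      ∃ sm : ↥(A' 1) → X → X,
        (∀ v : X, sm 1 v = v) ∧
        (∀ (a b : ↥(A' 1)) (v : X), sm (a * b) v = sm a (sm b v)) ∧
        (∀ (a : ↥(A' 1)) (v w : X), sm a (v + w) = sm a v + sm a w) ∧
        (∀ (a b : ↥(A' 1)) (v : X), sm (a + b) v = sm a v + sm b v) ∧
        (∀ (a : ↥(A' 1)) (hb : (a : A) ∈ A' 0) (v : X),
          sm a v = (⟨(a : A), hb⟩ : ↥(A' 0)) • v) ∧
        (∀ x : Fin (s - 1) → A,
          (∀ j : Fin (s - 1), x j ∈ I ⟨j.1 + 1, by omega⟩) →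
          ∀ (hm : (List.ofFn fun j : Fin (s - 1) => x j.rev).prod ∈ A' 1) (v : X),
            sm (⟨(List.ofFn fun j : Fin (s - 1) => x j.rev).prod, hm⟩ : ↥(A' 1)) v = 0))) :
    FinFinDim ↥(A' 0) := by
  have hS : Module.Finite R ↥(A' 0) := inferInstanceAs (Module.Finite R (A' 0).toSubmodule)
  have := IsNoetherianRing.of_finite R ↥(A' 0)
  have := IsArtinianRing.of_finite R ↥(A' 0)
  have := IsNoetherianRing.of_finite R A
  have := IsArtinianRing.of_finite R A
  have : Module.Finite ↥(A' 0) A := Module.Finite.of_restrictScalars_finite R ↥(A' 0) A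
  obtain ⟨n, rfl⟩ : ∃ n, s = n + 1 := ⟨s - 1, by lia⟩
  refine finFinDim_of_subalgebra (T := A' 1) (hchain 0) ?_
    {p | ∃ x : Fin n → A, (∀ j, x j ∈ I j.succ) ∧ p = (List.ofFn fun j => x j.rev).prod} ?_ h1 ?_
  · have h0 : radSet (A' 0) = I 0 := hI0.symm
    rw [h0]
    exact hIleft 0
  · rintro _ ⟨x, hx, rfl⟩ a
    have := list_prod_ofFn_rev_mul_mem
      (fun j => {b : A | ∀ h : j < n + 1, b ∈ A' (Fin.succ ⟨j, h⟩)})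
      x (fun j b hb h => hIsub j.succ (hIleft j.succ _ (hx j) b (hb _))) a
      (fun h => by
        have : a ∈ A' (Fin.last (n + 1)) := by rw [htop]; trivial
        exact this)
    exact this (Nat.succ_pos n)
  · obtain ⟨m, M, hM, hMZ⟩ := hq
    refine ⟨m, M, hM, fun X hX => hMZ X ?_⟩
    obtain ⟨hX, sm, h1, h2, h3, h4, h5, h6⟩ := hX
    exact ⟨hX, sm, h1, h2, h3, h4, h5, fun x hx hm v => h6 _ ⟨x, hx, rfl⟩ hm v⟩
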